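/- Let l > 0 and let u be the vortex map on B_l. There exists l₀ > 0 such that for every l ≥ l₀ the L¹-relaxed area of the graph of u satisfies Ā(u, B_l) = ∫_{B_l} √(1 + |∇u(x)|²) dx + π, where ∇u is the classical gradient of u on B_l \ {0}. -/

import Mathlib

open MeasureTheory Filter Metric Topology
open scoped ENNReal NNReal

noncomputable section

abbrev V2 : Type := EuclideanSpace ℝ (Fin 2)

/-- Squared Frobenius norm of (the matrix of) a continuous linear map on `ℝ²`. -/
def frobSq (L : V2 →L[ℝ] V2) : ℝ :=
  ∑ i : Fin 2, ∑ j : Fin 2, (L (EuclideanSpace.single j 1) i) ^ 2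

/-- Determinant of (the matrix of) a continuous linear map on `ℝ²`. -/
def detJ (L : V2 →L[ℝ] V2) : ℝ :=
  L (EuclideanSpace.single 0 1) 0 * L (EuclideanSpace.single 1 1) 1 -
    L (EuclideanSpace.single 1 1) 0 * L (EuclideanSpace.single 0 1) 1

/-- The vortex map `x ↦ x / |x|` (equal to `0` at the origin). -/
def vortex (x : V2) : V2 := ‖x‖⁻¹ • x

/-- The area integrand `√(1 + |∇v|² + (det ∇v)²)`. -/
def areaIntegrand (v : V2 → V2) (x : V2) : ℝ :=
  Real.sqrt (1 + frobSq (fderiv ℝ v x) + detJ (fderiv ℝ v x) ^ 2)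

/-- Area of the graph of `v` over the set `E`. -/
def graphArea (v : V2 → V2) (E : Set V2) : ℝ≥0∞ :=
  ∫⁻ x in E, ENNReal.ofReal (areaIntegrand v x)

/-- `∫_{B_l} √(1 + |∇u|²) dx` for the vortex map `u`. -/
def vortexGradArea (l : ℝ) : ℝ≥0∞ :=
  ∫⁻ x in ball (0 : V2) l, ENNReal.ofReal (Real.sqrt (1 + frobSq (fderiv ℝ vortex x)))

/-- The `L¹`-relaxed area of the graph of the vortex map over `B_l`:
the infimum of `liminf_k 𝒜(v_k, B_l)` over all sequences `(v_k)` of maps that are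
`C¹` on `B_l` and converge to the vortex map in `L¹(B_l, ℝ²)`. -/
def relaxedArea (l : ℝ) : ℝ≥0∞ :=
  sInf { a : ℝ≥0∞ | ∃ v : ℕ → V2 → V2,
    (∀ k, ContDiffOn ℝ 1 (v k) (ball (0 : V2) l)) ∧
    Tendsto (fun k => ∫⁻ x in ball (0 : V2) l, ENNReal.ofReal ‖v k x - vortex x‖)
      atTop (𝓝 0) ∧
    a = Filter.liminf (fun k => graphArea (v k) (ball (0 : V2) l)) atTop }



/-! ### Weak symmetry of second derivatives -/

/-- The two-dimensional Jacobian of a pair of scalar functions. -/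
def JJ (f g : V2 → ℝ) (x : V2) : ℝ :=
  fderiv ℝ f x (EuclideanSpace.single 0 1) * fderiv ℝ g x (EuclideanSpace.single 1 1) -
    fderiv ℝ f x (EuclideanSpace.single 1 1) * fderiv ℝ g x (EuclideanSpace.single 0 1)

lemma diffQuot_tendsto {f : V2 → ℝ} (hf : Differentiable ℝ f) (x b : V2) (h : ℕ → ℝ)
    (h0 : ∀ n, h n ≠ 0) (hh : Tendsto h atTop (𝓝 0)) :
    Tendsto (fun n => (h n)⁻¹ * (f (x + h n • b) - f x)) atTop (𝓝 (fderiv ℝ f x b)) := by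
  have h1 := (hf x).hasFDerivAt.hasLineDerivAt b
  have h2 := hasDerivAt_iff_tendsto_slope_zero.1 h1
  have h3 : Tendsto h atTop (𝓝[≠] 0) :=
    tendsto_nhdsWithin_iff.2 ⟨hh, Eventually.of_forall (fun n => h0 n)⟩
  have h4 := h2.comp h3
  refine h4.congr (fun n => ?_)
  simp

lemma integrable_fderiv_cs {f : V2 → ℝ} (hf : ContDiff ℝ 1 f) (hfc : HasCompactSupport f) (a : V2) :
    Integrable (fun x => fderiv ℝ f x a) := by
  refine Continuous.integrable_of_hasCompactSupport ?_ ?_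
  · exact (hf.continuous_fderiv (by simp)).clm_apply continuous_const
  · exact hfc.fderiv_apply (𝕜 := ℝ) a

lemma diffQuot_bound {f : V2 → ℝ} (hf : ContDiff ℝ 1 f) (hfc : HasCompactSupport f) (b : V2) :
    ∃ C : ℝ, ∀ x : V2, ∀ h : ℝ, ‖h⁻¹ * (f (x + h • b) - f x)‖ ≤ C := by
  obtain ⟨C, hC⟩ := ContDiff.lipschitzWith_of_hasCompactSupport hfc hf (by simp)
  refine ⟨C * ‖b‖, fun x h => ?_⟩
  rcases eq_or_ne h 0 with rfl | hh
  · simp; positivity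
  have := hC.dist_le_mul (x + h • b) x
  rw [dist_eq_norm, dist_eq_norm] at this
  rw [norm_mul, norm_inv]
  simp only [add_sub_cancel_left, norm_smul] at this
  have hp : 0 < ‖h‖ := norm_pos_iff.2 hh
  rw [inv_mul_le_iff₀ hp]
  linarith

lemma int_symm {f g : V2 → ℝ} (hf : ContDiff ℝ 1 f) (hfc : HasCompactSupport f)
    (hg : ContDiff ℝ 1 g) (hgc : HasCompactSupport g) (a b : V2) :
    ∫ x, fderiv ℝ f x a * fderiv ℝ g x b = ∫ x, fderiv ℝ f x b * fderiv ℝ g x a := by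
  set h : ℕ → ℝ := fun n => 1 / ((n : ℝ) + 1) with hh
  have h0 : ∀ n, h n ≠ 0 := fun n => by positivity
  have ht : Tendsto h atTop (𝓝 0) := tendsto_one_div_add_atTop_nhds_zero_nat
  have hfd : Differentiable ℝ f := hf.differentiable (by simp)
  have hgd : Differentiable ℝ g := hg.differentiable (by simp)
  have hDf : ∀ a, Continuous (fun x => fderiv ℝ f x a) :=
    fun a => (hf.continuous_fderiv (by simp)).clm_apply continuous_const
  have hDg : ∀ a, Continuous (fun x => fderiv ℝ g x a) :=
    fun a => (hg.continuous_fderiv (by simp)).clm_apply continuous_const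
  obtain ⟨Cg, hCg⟩ := diffQuot_bound hg hgc b
  obtain ⟨Cf, hCf⟩ := diffQuot_bound hf hfc (-b)
  have T1 : Tendsto (fun n => ∫ x, fderiv ℝ f x a * ((h n)⁻¹ * (g (x + h n • b) - g x))) atTop
      (𝓝 (∫ x, fderiv ℝ f x a * fderiv ℝ g x b)) := by
    refine tendsto_integral_of_dominated_convergence (fun x => ‖fderiv ℝ f x a‖ * Cg) ?_ ?_ ?_ ?_
    · intro n
      refine Continuous.aestronglyMeasurable ?_
      have := hDf a
      have := hg.continuous
      fun_prop
    · exact (integrable_fderiv_cs hf hfc a).norm.mul_const _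
    · intro n
      refine Eventually.of_forall (fun x => ?_)
      rw [norm_mul]
      exact mul_le_mul_of_nonneg_left (hCg x (h n)) (norm_nonneg _)
    · refine Eventually.of_forall (fun x => ?_)
      exact (diffQuot_tendsto hgd x b h h0 ht).const_mul _
  have T2 : Tendsto (fun n => ∫ x, ((h n)⁻¹ * (f (x + h n • (-b)) - f x)) * fderiv ℝ g x a) atTop
      (𝓝 (∫ x, fderiv ℝ f x (-b) * fderiv ℝ g x a)) := by
    refine tendsto_integral_of_dominated_convergence (fun x => Cf * ‖fderiv ℝ g x a‖) ?_ ?_ ?_ ?_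
    · intro n
      refine Continuous.aestronglyMeasurable ?_
      have := hDg a
      have := hf.continuous
      fun_prop
    · exact (integrable_fderiv_cs hg hgc a).norm.const_mul _
    · intro n
      refine Eventually.of_forall (fun x => ?_)
      rw [norm_mul]
      exact mul_le_mul_of_nonneg_right (hCf x (h n)) (norm_nonneg _)
    · refine Eventually.of_forall (fun x => ?_)
      exact (diffQuot_tendsto hfd x (-b) h h0 ht).mul_const _
  have E : ∀ n, ∫ x, fderiv ℝ f x a * ((h n)⁻¹ * (g (x + h n • b) - g x))
      = - ∫ x, ((h n)⁻¹ * (f (x + h n • (-b)) - f x)) * fderiv ℝ g x a := by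
    intro n
    set k := h n
    -- integrate by parts the shifted and unshifted functions
    have key : ∀ w : V2, ∫ x, fderiv ℝ f x a * g (x + w) = - ∫ x, f (x - w) * fderiv ℝ g x a := by
      intro w
      have hgw : ContDiff ℝ 1 (fun x => g (x + w)) := hg.comp (contDiff_id.add contDiff_const)
      have hfd' : ∀ x, fderiv ℝ (fun x => g (x + w)) x a = fderiv ℝ g (x + w) a := by
        intro x; rw [fderiv_comp_add_right]
      have p := integral_mul_fderiv_eq_neg_fderiv_mul_of_integrable (μ := (volume : Measure V2))
        (f := f) (g := fun x => g (x + w)) (v := a) ?_ ?_ ?_ ?_ ?_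
      · have q : ∫ x, f x * fderiv ℝ (fun x => g (x + w)) x a
            = ∫ x, f (x - w) * fderiv ℝ g x a := by
          simp only [hfd']
          rw [← integral_sub_right_eq_self (fun x => f x * fderiv ℝ g (x + w) a) w]
          simp
        rw [← q, p]; simp
      · refine Continuous.integrable_of_hasCompactSupport ((hDf a).mul hgw.continuous) ?_
        exact (hfc.fderiv_apply (𝕜 := ℝ) a).mul_right
      · refine Continuous.integrable_of_hasCompactSupport (hf.continuous.mul ?_) ?_
        · simp only [hfd']; exact (hDg a).comp (continuous_id.add continuous_const)
        · exact hfc.mul_right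
      · refine Continuous.integrable_of_hasCompactSupport (hf.continuous.mul hgw.continuous) ?_
        exact hfc.mul_right
      · intro x _; exact hfd x
      · intro x _; exact hgw.differentiable (by simp) x
    have I1 : ∀ w : V2, Integrable (fun x => fderiv ℝ f x a * g (x + w)) := by
      intro w
      refine Continuous.integrable_of_hasCompactSupport ((hDf a).mul ?_) ?_
      · exact hg.continuous.comp (continuous_id.add continuous_const)
      · exact (hfc.fderiv_apply (𝕜 := ℝ) a).mul_right
    have I2 : ∀ w : V2, Integrable (fun x => f (x - w) * fderiv ℝ g x a) := by
      intro w
      refine Continuous.integrable_of_hasCompactSupport (Continuous.mul ?_ (hDg a)) ?_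
      · exact hf.continuous.comp (continuous_id.sub continuous_const)
      · exact (hgc.fderiv_apply (𝕜 := ℝ) a).mul_left
    have e1 : ∀ x, fderiv ℝ f x a * (k⁻¹ * (g (x + k • b) - g x))
        = k⁻¹ * (fderiv ℝ f x a * g (x + k • b) - fderiv ℝ f x a * g (x + 0)) := by
      intro x; rw [add_zero]; ring
    have e2 : ∀ x, (k⁻¹ * (f (x + k • (-b)) - f x)) * fderiv ℝ g x a
        = k⁻¹ * (f (x - k • b) * fderiv ℝ g x a - f (x - 0) * fderiv ℝ g x a) := by
      intro x; rw [sub_zero, smul_neg, ← sub_eq_add_neg]; ring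
    simp only [e1, e2]
    rw [integral_const_mul, integral_const_mul, integral_sub (I1 _) (I1 _),
      integral_sub (I2 _) (I2 _), key, key]
    ring
  have T3 := T2.neg
  simp only [← E] at T3
  have := tendsto_nhds_unique T1 T3
  rw [this, ← integral_neg]
  simp

lemma contDiff_of_ball {l R : ℝ} (hR : R < l) {f : V2 → ℝ} (hf : ContDiffOn ℝ 1 f (ball 0 l))
    (hf0 : ∀ x, R < ‖x‖ → f x = 0) : ContDiff ℝ 1 f ∧ HasCompactSupport f := by
  constructor
  · rw [contDiff_iff_contDiffAt]
    intro x
    by_cases hx : ‖x‖ < l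
    · exact hf.contDiffAt (isOpen_ball.mem_nhds (by simpa using hx))
    · have : f =ᶠ[𝓝 x] fun _ => 0 := by
        have ho : IsOpen {y : V2 | R < ‖y‖} := isOpen_lt continuous_const continuous_norm
        filter_upwards [ho.mem_nhds (show R < ‖x‖ by linarith)] with y hy using hf0 y hy
      exact contDiffAt_const.congr_of_eventuallyEq this
  · refine HasCompactSupport.intro (isCompact_closedBall (0 : V2) R) (fun x hx => hf0 x ?_)
    simpa using hx

lemma null_int {l R : ℝ} (hR0 : 0 < R) (hR : R < l) {f g : V2 → ℝ}
    (hf : ContDiffOn ℝ 1 f (ball 0 l))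
    (hf0 : ∀ x, R < ‖x‖ → f x = 0) (hg : ContDiffOn ℝ 1 g (ball 0 l)) :
    Integrable (JJ f g) ∧ ∫ x in ball (0 : V2) l, JJ f g x = 0 := by
  obtain ⟨hfC, hfc⟩ := contDiff_of_ball hR hf hf0
  obtain ⟨R1, h1, h1'⟩ := exists_between hR
  obtain ⟨R2, h2, h2'⟩ := exists_between h1'
  let χ : ContDiffBump (0 : V2) := ⟨R1, R2, by linarith, h2⟩
  obtain ⟨hgC, hgc⟩ := contDiff_of_ball (f := fun x => χ x * g x) h2'
    (χ.contDiff.contDiffOn.mul hg) (by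
      intro x hx
      have : χ x = 0 := χ.zero_of_le_dist (by simpa [χ] using hx.le)
      simp [this])
  have hz : ∀ x, R < ‖x‖ → fderiv ℝ f x = 0 := by
    intro x hx
    have : f =ᶠ[𝓝 x] fun _ => 0 := by
      have ho : IsOpen {y : V2 | R < ‖y‖} := isOpen_lt continuous_const continuous_norm
      filter_upwards [ho.mem_nhds hx] with y hy using hf0 y hy
    rw [this.fderiv_eq]; simp
  have hJ : JJ f g = JJ f (fun x => χ x * g x) := by
    funext x
    by_cases hx : R < ‖x‖
    · simp [JJ, hz x hx]
    · have : (fun x => χ x * g x) =ᶠ[𝓝 x] g := by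
        filter_upwards [isOpen_ball.mem_nhds (show x ∈ ball (0 : V2) R1 by simp; linarith)]
          with y hy
        have : χ y = 1 := χ.one_of_mem_closedBall (by
          simp [χ] at hy ⊢; exact hy.le)
        simp [this]
      simp [JJ, this.fderiv_eq]
  have hDf : ∀ a, Continuous (fun x => fderiv ℝ f x a) :=
    fun a => (hfC.continuous_fderiv (by simp)).clm_apply continuous_const
  have hDg : ∀ a, Continuous (fun x => fderiv ℝ (fun x => χ x * g x) x a) :=
    fun a => (hgC.continuous_fderiv (by simp)).clm_apply continuous_const
  have hI : ∀ a b, Integrable (fun x => fderiv ℝ f x a * fderiv ℝ (fun x => χ x * g x) x b) := by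
    intro a b
    refine Continuous.integrable_of_hasCompactSupport ((hDf a).mul (hDg b)) ?_
    exact (hfc.fderiv_apply (𝕜 := ℝ) a).mul_right
  have hJint : Integrable (JJ f g) := by
    rw [hJ]; exact (hI _ _).sub (hI _ _)
  refine ⟨hJint, ?_⟩
  rw [setIntegral_eq_integral_of_forall_compl_eq_zero]
  · rw [hJ]; unfold JJ
    rw [integral_sub (hI _ _) (hI _ _), int_symm hfC hfc hgC hgc]; simp
  · intro x hx
    simp at hx
    simp [JJ, hz x (by linarith)]


/-! ### The regularised vortex and the upper bound -/

/-- The regularised vortex. -/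
def vv (c : ℝ) (x : V2) : V2 := (Real.sqrt (‖x‖ ^ 2 + c))⁻¹ • x

lemma vortex_eq_vv : vortex = vv 0 := by
  funext x; simp [vortex, vv]

lemma hasFDerivAt_normSq (x : V2) :
    HasFDerivAt (fun y : V2 => ‖y‖ ^ 2) ((2 : ℝ) • innerSL ℝ x) x := by
  have := (hasStrictFDerivAt_norm_sq x).hasFDerivAt
  refine this.congr_fderiv ?_
  ext y; simp

lemma hasDerivAt_invsqrt {c s : ℝ} (h : 0 < s + c) :
    HasDerivAt (fun s => (Real.sqrt (s + c))⁻¹) (-((Real.sqrt (s + c))⁻¹ ^ 3) / 2) s := by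
  have h1 : HasDerivAt (fun s : ℝ => s + c) 1 s := (hasDerivAt_id s).add_const c
  have h2 := h1.sqrt h.ne'
  have hp : 0 < Real.sqrt (s + c) := Real.sqrt_pos.2 h
  have h3 := h2.inv hp.ne'
  refine h3.congr_deriv ?_
  field_simp

lemma hasFDerivAt_g {c : ℝ} {x : V2} (h : 0 < ‖x‖ ^ 2 + c) :
    HasFDerivAt (fun y : V2 => (Real.sqrt (‖y‖ ^ 2 + c))⁻¹)
      ((-((Real.sqrt (‖x‖ ^ 2 + c))⁻¹ ^ 3)) • innerSL ℝ x) x := by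
  have h1 := (hasDerivAt_invsqrt h).comp_hasFDerivAt x (hasFDerivAt_normSq x)
  refine h1.congr_fderiv ?_
  rw [smul_smul]; congr 1; ring

lemma hasFDerivAt_vv {c : ℝ} {x : V2} (h : 0 < ‖x‖ ^ 2 + c) :
    HasFDerivAt (vv c) ((Real.sqrt (‖x‖ ^ 2 + c))⁻¹ • ContinuousLinearMap.id ℝ V2 +
      ((-((Real.sqrt (‖x‖ ^ 2 + c))⁻¹ ^ 3)) • innerSL ℝ x).smulRight x) x :=
  (hasFDerivAt_g h).smul (hasFDerivAt_id x)

lemma fderiv_vv_apply {c : ℝ} {x : V2} (h : 0 < ‖x‖ ^ 2 + c) (y : V2) (i : Fin 2) :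
    fderiv ℝ (vv c) x y i = (Real.sqrt (‖x‖ ^ 2 + c))⁻¹ * y i -
      (Real.sqrt (‖x‖ ^ 2 + c))⁻¹ ^ 3 * (x 0 * y 0 + x 1 * y 1) * x i := by
  rw [(hasFDerivAt_vv h).fderiv]
  simp [PiLp.inner_apply, Fin.sum_univ_two]
  ring

lemma normSq_eq (x : V2) : ‖x‖ ^ 2 = x 0 ^ 2 + x 1 ^ 2 := by
  rw [EuclideanSpace.real_norm_sq_eq, Fin.sum_univ_two]

lemma frobSq_vv {c : ℝ} {x : V2} (h : 0 < ‖x‖ ^ 2 + c) :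
    frobSq (fderiv ℝ (vv c) x) = (Real.sqrt (‖x‖ ^ 2 + c))⁻¹ ^ 2 +
      (c * (Real.sqrt (‖x‖ ^ 2 + c))⁻¹ ^ 3) ^ 2 := by
  have hg : (Real.sqrt (‖x‖ ^ 2 + c))⁻¹ ^ 2 * (‖x‖ ^ 2 + c) = 1 := by
    rw [inv_pow, Real.sq_sqrt h.le, inv_mul_cancel₀ h.ne']
  unfold frobSq
  simp only [fderiv_vv_apply h, Fin.sum_univ_two]
  generalize (Real.sqrt (‖x‖ ^ 2 + c))⁻¹ = g at *
  rw [normSq_eq] at hg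
  simp
  have hc : c * g ^ 2 = 1 - g ^ 2 * (x 0 ^ 2 + x 1 ^ 2) := by linarith
  have : c * g ^ 3 = g * (1 - g ^ 2 * (x 0 ^ 2 + x 1 ^ 2)) := by rw [← hc]; ring
  rw [this]; ring

lemma detJ_vv {c : ℝ} {x : V2} (h : 0 < ‖x‖ ^ 2 + c) :
    detJ (fderiv ℝ (vv c) x) = c * (Real.sqrt (‖x‖ ^ 2 + c))⁻¹ ^ 4 := by
  have hg : (Real.sqrt (‖x‖ ^ 2 + c))⁻¹ ^ 2 * (‖x‖ ^ 2 + c) = 1 := by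
    rw [inv_pow, Real.sq_sqrt h.le, inv_mul_cancel₀ h.ne']
  unfold detJ
  simp only [fderiv_vv_apply h]
  generalize (Real.sqrt (‖x‖ ^ 2 + c))⁻¹ = g at *
  rw [normSq_eq] at hg
  simp
  have hc : c * g ^ 2 = 1 - g ^ 2 * (x 0 ^ 2 + x 1 ^ 2) := by linarith
  have : c * g ^ 4 = g ^ 2 * (1 - g ^ 2 * (x 0 ^ 2 + x 1 ^ 2)) := by rw [← hc]; ring
  rw [this]; ring

lemma frobSq_vortex {x : V2} (hx : x ≠ 0) : frobSq (fderiv ℝ vortex x) = (‖x‖⁻¹) ^ 2 := by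
  have h : 0 < ‖x‖ ^ 2 + 0 := by have := norm_pos_iff.2 hx; positivity
  rw [vortex_eq_vv, frobSq_vv h]; simp

lemma areaIntegrand_vv_le {c : ℝ} (hc : 0 < c) {x : V2} (hx : x ≠ 0) :
    areaIntegrand (vv c) x ≤ Real.sqrt (1 + frobSq (fderiv ℝ vortex x)) +
      (c * (Real.sqrt (‖x‖ ^ 2 + c))⁻¹ ^ 3 + c * (Real.sqrt (‖x‖ ^ 2 + c))⁻¹ ^ 4) := by
  have h : 0 < ‖x‖ ^ 2 + c := by positivity
  have hn := norm_pos_iff.2 hx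
  unfold areaIntegrand
  rw [frobSq_vv h, detJ_vv h, frobSq_vortex hx]
  have hg0 : 0 ≤ (Real.sqrt (‖x‖ ^ 2 + c))⁻¹ := by positivity
  have hg1 : (Real.sqrt (‖x‖ ^ 2 + c))⁻¹ ≤ ‖x‖⁻¹ := by
    apply inv_anti₀ hn
    apply Real.le_sqrt_of_sq_le; linarith
  generalize (Real.sqrt (‖x‖ ^ 2 + c))⁻¹ = g at *
  set m := ‖x‖⁻¹
  have e : 1 + (g ^ 2 + (c * g ^ 3) ^ 2) + (c * g ^ 4) ^ 2 = (1 + g ^ 2) * (1 + (c * g ^ 3) ^ 2) := by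
    ring
  rw [e, Real.sqrt_mul (by positivity)]
  have h1 : Real.sqrt (1 + (c * g ^ 3) ^ 2) ≤ 1 + c * g ^ 3 := by
    apply Real.sqrt_le_iff.2; constructor
    · positivity
    · have : 0 ≤ c * g ^ 3 := by positivity
      nlinarith
  have h2 : Real.sqrt (1 + g ^ 2) ≤ 1 + g := by
    apply Real.sqrt_le_iff.2; constructor
    · positivity
    · nlinarith
  have h3 : Real.sqrt (1 + g ^ 2) ≤ Real.sqrt (1 + m ^ 2) := by
    apply Real.sqrt_le_sqrt; gcongr
  have h4 : 0 ≤ c * g ^ 3 := by positivity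
  calc Real.sqrt (1 + g ^ 2) * Real.sqrt (1 + (c * g ^ 3) ^ 2)
      ≤ Real.sqrt (1 + g ^ 2) * (1 + c * g ^ 3) := by gcongr
    _ = Real.sqrt (1 + g ^ 2) + Real.sqrt (1 + g ^ 2) * (c * g ^ 3) := by ring
    _ ≤ Real.sqrt (1 + m ^ 2) + (1 + g) * (c * g ^ 3) := by gcongr
    _ = _ := by ring

/-- Radial integrals in the plane. -/
lemma radial_integral {f F : ℝ → ℝ} (hF : ∀ y ∈ Set.Ici (0 : ℝ), HasDerivAt F (y * f y) y)
    (hf : ∀ y ∈ Set.Ioi (0 : ℝ), 0 ≤ y * f y) {L : ℝ} (hL : Tendsto F atTop (𝓝 L)) :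
    Integrable (fun x : V2 => f ‖x‖) ∧ ∫ x : V2, f ‖x‖ = 2 * Real.pi * (L - F 0) := by
  have h1 := integral_Ioi_of_hasDerivAt_of_nonneg' hF hf hL
  have h2 := integrableOn_Ioi_deriv_of_nonneg' hF hf hL
  constructor
  · rw [integrable_fun_norm_addHaar]
    simpa using h2
  · rw [integral_fun_norm_addHaar]
    simp only [finrank_euclideanSpace, Fintype.card_fin]
    have : (volume : Measure V2).real (ball 0 1) = Real.pi := by
      rw [Measure.real, EuclideanSpace.volume_ball_fin_two]
      simp [Real.pi_pos.le]
    rw [this]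
    simp only [Nat.add_one_sub_one, pow_one, smul_eq_mul, h1, nsmul_eq_mul]
    push_cast; ring

lemma tendsto_sqrt_inv (c : ℝ) :
    Tendsto (fun y : ℝ => (Real.sqrt (y ^ 2 + c))⁻¹) atTop (𝓝 0) := by
  apply Tendsto.inv_tendsto_atTop
  apply Real.tendsto_sqrt_atTop.comp
  apply tendsto_atTop_add_const_right
  exact tendsto_pow_atTop (by norm_num)

lemma err_integral {c : ℝ} (hc : 0 < c) :
    Integrable (fun x : V2 => c * (Real.sqrt (‖x‖ ^ 2 + c))⁻¹ ^ 3 +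
      c * (Real.sqrt (‖x‖ ^ 2 + c))⁻¹ ^ 4) ∧
    ∫ x : V2, (c * (Real.sqrt (‖x‖ ^ 2 + c))⁻¹ ^ 3 +
      c * (Real.sqrt (‖x‖ ^ 2 + c))⁻¹ ^ 4) = 2 * Real.pi * Real.sqrt c + Real.pi := by
  have hs : 0 < Real.sqrt c := Real.sqrt_pos.2 hc
  have := radial_integral (f := fun y => c * (Real.sqrt (y ^ 2 + c))⁻¹ ^ 3 +
      c * (Real.sqrt (y ^ 2 + c))⁻¹ ^ 4)
      (F := fun y => - c * (Real.sqrt (y ^ 2 + c))⁻¹ - c / 2 * (Real.sqrt (y ^ 2 + c))⁻¹ ^ 2)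
      (L := - c * 0 - c / 2 * 0 ^ 2) ?_ ?_ ?_
  · refine ⟨this.1, this.2.trans ?_⟩
    simp only [ne_eq, OfNat.ofNat_ne_zero, not_false_eq_true, zero_pow, zero_add]
    have : Real.sqrt c ^ 2 = c := Real.sq_sqrt hc.le
    generalize Real.sqrt c = s at *
    subst this
    field_simp
    ring
  · intro y _
    have h : 0 < y ^ 2 + c := by positivity
    have h1 : HasDerivAt (fun y : ℝ => (Real.sqrt (y ^ 2 + c))⁻¹)
        (-((Real.sqrt (y ^ 2 + c))⁻¹ ^ 3) / 2 * (2 * y)) y := by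
      have := HasDerivAt.comp (h := fun y : ℝ => y ^ 2) y (hasDerivAt_invsqrt h) (hasDerivAt_pow 2 y)
      exact this.congr_deriv (by push_cast; ring)
    have h2 := (h1.const_mul (-c)).sub ((h1.pow 2).const_mul (c / 2))
    refine h2.congr_deriv ?_
    push_cast; ring
  · intro y hy
    have : 0 < y := hy
    positivity
  · exact ((tendsto_sqrt_inv c).const_mul _).sub (((tendsto_sqrt_inv c).pow 2).const_mul _)

lemma graphArea_vv_le {c : ℝ} (hc : 0 < c) (l : ℝ) :
    graphArea (vv c) (ball 0 l) ≤
      vortexGradArea l + ENNReal.ofReal (2 * Real.pi * Real.sqrt c + Real.pi) := by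
  obtain ⟨hI, hE⟩ := err_integral hc
  have h0 : ∀ x : V2, 0 ≤ c * (Real.sqrt (‖x‖ ^ 2 + c))⁻¹ ^ 3 +
      c * (Real.sqrt (‖x‖ ^ 2 + c))⁻¹ ^ 4 := fun x => by positivity
  rw [← hE, ofReal_integral_eq_lintegral_ofReal hI (Eventually.of_forall h0)]
  unfold graphArea vortexGradArea
  have hm : AEMeasurable (fun x : V2 => ENNReal.ofReal (c * (Real.sqrt (‖x‖ ^ 2 + c))⁻¹ ^ 3 +
      c * (Real.sqrt (‖x‖ ^ 2 + c))⁻¹ ^ 4)) (volume.restrict (ball 0 l)) :=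
    hI.aestronglyMeasurable.aemeasurable.ennreal_ofReal.restrict
  calc _ ≤ ∫⁻ x in ball (0 : V2) l, (ENNReal.ofReal (Real.sqrt (1 + frobSq (fderiv ℝ vortex x)))
        + ENNReal.ofReal (c * (Real.sqrt (‖x‖ ^ 2 + c))⁻¹ ^ 3 +
      c * (Real.sqrt (‖x‖ ^ 2 + c))⁻¹ ^ 4)) := by
        apply lintegral_mono_ae
        have : ∀ᵐ x : V2 ∂(volume.restrict (ball 0 l)), x ≠ 0 :=
          ae_restrict_of_ae (Measure.ae_ne volume 0)
        filter_upwards [this] with x hx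
        rw [← ENNReal.ofReal_add (Real.sqrt_nonneg _) (h0 x)]
        exact ENNReal.ofReal_le_ofReal (areaIntegrand_vv_le hc hx)
    _ = _ := lintegral_add_right' _ hm
    _ ≤ _ := by gcongr; exact Measure.restrict_le_self

lemma contDiff_vv {c : ℝ} (hc : 0 < c) : ContDiff ℝ 1 (vv c) := by
  unfold vv
  have h : ∀ x : V2, ‖x‖ ^ 2 + c ≠ 0 := fun x => by positivity
  have h1 : ContDiff ℝ 1 (fun x : V2 => Real.sqrt (‖x‖ ^ 2 + c)) :=
    ((contDiff_norm_sq ℝ).add contDiff_const).sqrt h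
  refine (h1.inv (fun x => ?_)).smul contDiff_id
  have : 0 < ‖x‖ ^ 2 + c := by positivity
  exact (Real.sqrt_pos.2 this).ne'

lemma upper_bound (l : ℝ) : relaxedArea l ≤ vortexGradArea l + ENNReal.ofReal Real.pi := by
  set c : ℕ → ℝ := fun k => 1 / ((k : ℝ) + 1) with hcdef
  have hc : ∀ k, 0 < c k := fun k => by positivity
  have hc0 : Tendsto c atTop (𝓝 0) := tendsto_one_div_add_atTop_nhds_zero_nat
  have hmem : Filter.liminf (fun k => graphArea (vv (c k)) (ball (0 : V2) l)) atTop ∈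
    { a : ℝ≥0∞ | ∃ v : ℕ → V2 → V2,
    (∀ k, ContDiffOn ℝ 1 (v k) (ball (0 : V2) l)) ∧
    Tendsto (fun k => ∫⁻ x in ball (0 : V2) l, ENNReal.ofReal ‖v k x - vortex x‖)
      atTop (𝓝 0) ∧
    a = Filter.liminf (fun k => graphArea (v k) (ball (0 : V2) l)) atTop } := by
    refine ⟨fun k => vv (c k), fun k => (contDiff_vv (hc k)).contDiffOn, ?_, rfl⟩
    have hlim : ∀ x : V2, x ≠ 0 → Tendsto (fun k => vv (c k) x) atTop (𝓝 (vortex x)) := by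
      intro x hx
      have hn := norm_pos_iff.2 hx
      unfold vv vortex
      refine Tendsto.smul_const ?_ x
      have : Tendsto (fun k => Real.sqrt (‖x‖ ^ 2 + c k)) atTop (𝓝 (Real.sqrt (‖x‖ ^ 2 + 0))) :=
        (Real.continuous_sqrt.tendsto _).comp (tendsto_const_nhds.add hc0)
      rw [add_zero, Real.sqrt_sq hn.le] at this
      exact this.inv₀ hn.ne'
    have hbd : ∀ k (x : V2), ‖vv (c k) x‖ ≤ 1 := by
      intro k x
      unfold vv
      rw [norm_smul, norm_inv, Real.norm_eq_abs, abs_of_nonneg (Real.sqrt_nonneg _)]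
      have h : 0 < ‖x‖ ^ 2 + c k := by have := hc k; positivity
      rw [inv_mul_le_iff₀ (Real.sqrt_pos.2 h), mul_one]
      apply Real.le_sqrt_of_sq_le; have := hc k; linarith
    have hvb : ∀ x : V2, ‖vortex x‖ ≤ 1 := by
      intro x
      unfold vortex
      rw [norm_smul, norm_inv, norm_norm]
      exact inv_mul_le_one
    have hvm : Measurable vortex := by
      unfold vortex; exact (measurable_norm.inv).smul measurable_id
    have := tendsto_lintegral_of_dominated_convergence (μ := volume.restrict (ball (0 : V2) l))
      (F := fun k x => ENNReal.ofReal ‖vv (c k) x - vortex x‖) (f := fun _ => 0)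
      (fun _ => ENNReal.ofReal 2) ?_ ?_ ?_ ?_
    · simpa using this
    · intro k
      exact ((contDiff_vv (hc k)).continuous.measurable.sub hvm).norm.ennreal_ofReal
    · intro k
      refine Eventually.of_forall (fun x => ENNReal.ofReal_le_ofReal ?_)
      have := norm_sub_le (vv (c k) x) (vortex x)
      have := hbd k x
      have := hvb x
      linarith
    · simp [ENNReal.mul_eq_top]
    · have : ∀ᵐ x : V2 ∂(volume.restrict (ball 0 l)), x ≠ 0 :=
          ae_restrict_of_ae (Measure.ae_ne volume 0)
      filter_upwards [this] with x hx
      have h := ((hlim x hx).sub_const (vortex x)).norm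
      rw [sub_self, norm_zero] at h
      simpa using ENNReal.tendsto_ofReal h
  refine (sInf_le hmem).trans ?_
  have hT : Tendsto (fun k => vortexGradArea l +
      ENNReal.ofReal (2 * Real.pi * Real.sqrt (c k) + Real.pi)) atTop
      (𝓝 (vortexGradArea l + ENNReal.ofReal (2 * Real.pi * Real.sqrt 0 + Real.pi))) := by
    refine tendsto_const_nhds.add (ENNReal.tendsto_ofReal ?_)
    exact (((Real.continuous_sqrt.tendsto _).comp hc0).const_mul _).add_const _
  simp only [Real.sqrt_zero, mul_zero, zero_add] at hT
  rw [← hT.liminf_eq]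
  exact liminf_le_liminf (Eventually.of_forall (fun k => graphArea_vv_le (hc k) l))


/-! ### The pointwise calibration inequality -/

lemma proj1 {c s : ℝ} (hcs : c ^ 2 + s ^ 2 = 1) (x y : ℝ) :
    (c * x + s * y) ^ 2 ≤ x ^ 2 + y ^ 2 := by
  have e : x ^ 2 + y ^ 2 = (c * x + s * y) ^ 2 + (-s * x + c * y) ^ 2 := by
    linear_combination (-(x ^ 2 + y ^ 2)) * hcs
  have := sq_nonneg (-s * x + c * y)
  linarith

lemma proj2 {c s : ℝ} (hcs : c ^ 2 + s ^ 2 = 1) (x y : ℝ) :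
    (-s * x + c * y) ^ 2 ≤ x ^ 2 + y ^ 2 := by
  have e : x ^ 2 + y ^ 2 = (c * x + s * y) ^ 2 + (-s * x + c * y) ^ 2 := by
    linear_combination (-(x ^ 2 + y ^ 2)) * hcs
  have := sq_nonneg (c * x + s * y)
  linarith

lemma near_t {c s v1 v2 lam zn : ℝ} (hcs : c ^ 2 + s ^ 2 = 1) (hlam4 : lam ≤ 1 / 4)
    (hzn0 : 0 ≤ zn) (hzn : zn ^ 2 = (v1 - c) ^ 2 + (v2 - s) ^ 2) (hS : zn < lam) :
    (1 - lam) ^ 2 ≤ v1 ^ 2 + v2 ^ 2 := by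
  have e1 : (c * (v1 - c) + s * (v2 - s)) ^ 2 ≤ zn ^ 2 := by
    rw [hzn]; exact proj1 hcs _ _
  have e2 : |c * (v1 - c) + s * (v2 - s)| ≤ zn := abs_le_of_sq_le_sq e1 hzn0
  have e3 := (abs_le.1 e2).1
  have e4 : c * (v1 - c) + s * (v2 - s) = c * v1 + s * v2 - 1 := by linear_combination -hcs
  have e5 := proj1 hcs v1 v2
  have e6 : (1 - lam) ^ 2 ≤ (c * v1 + s * v2) ^ 2 := by
    apply pow_le_pow_left₀ <;> linarith
  linarith

lemma near_F {c s v1 v2 lam zn a M : ℝ} (hcs : c ^ 2 + s ^ 2 = 1)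
    (hzn0 : 0 ≤ zn) (hzn : zn ^ 2 = (v1 - c) ^ 2 + (v2 - s) ^ 2) (hS : zn < lam)
    (hat : a * (v1 ^ 2 + v2 ^ 2) = M) (hM0 : 0 ≤ M) (hM1 : M ≤ 1 / 2)
    (ht : 1 / 4 ≤ v1 ^ 2 + v2 ^ 2) :
    (a * v2 - M * s) ^ 2 + (-a * v1 + M * c) ^ 2 ≤ lam ^ 2 := by
  have e : ((a * v2 - M * s) ^ 2 + (-a * v1 + M * c) ^ 2) * (v1 ^ 2 + v2 ^ 2) = M ^ 2 * zn ^ 2 := by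
    rw [hzn, ← hat]
    linear_combination (a ^ 2 * (v1 ^ 2 + v2 ^ 2) ^ 3 - a ^ 2 * (v1 ^ 2 + v2 ^ 2) ^ 2) * hcs
  have e3 : M ^ 2 * zn ^ 2 ≤ (1 / 4) * lam ^ 2 := by
    have : M ^ 2 ≤ 1 / 4 := by nlinarith
    gcongr
  have e4 := mul_le_mul_of_nonneg_left ht
    (show 0 ≤ (a * v2 - M * s) ^ 2 + (-a * v1 + M * c) ^ 2 by positivity)
  linarith

lemma far_F {c s v1 v2 a M : ℝ} (hcs : c ^ 2 + s ^ 2 = 1)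
    (ha : a ^ 2 * (v1 ^ 2 + v2 ^ 2) ≤ 1 / 4) (hM0 : 0 ≤ M) (hM1 : M ≤ 1 / 2) :
    (a * v2 - M * s) ^ 2 + (-a * v1 + M * c) ^ 2 ≤ 1 := by
  have e1 : (a * v2 - M * s) ^ 2 + (-a * v1 + M * c) ^ 2 ≤
      2 * (a ^ 2 * (v1 ^ 2 + v2 ^ 2)) + 2 * (M ^ 2 * (c ^ 2 + s ^ 2)) := by
    nlinarith [sq_nonneg (a * v2 + M * s), sq_nonneg (a * v1 + M * c)]
  rw [hcs] at e1
  have : M ^ 2 ≤ 1 / 4 := by nlinarith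
  linarith

lemma q_bounds {lam zn q : ℝ} (hlam : 0 < lam) (hzn0 : 0 ≤ zn)
    (hq : q = max 0 (1 - zn ^ 2 / lam ^ 2)) :
    0 ≤ q ∧ q ≤ 1 ∧ 1 - q ≤ zn / lam ∧ q * (zn / lam) ^ 2 ≤ zn / lam := by
  rw [← div_pow] at hq
  have h3 : 0 ≤ zn / lam := by positivity
  generalize zn / lam = y at *
  have hq0 : 0 ≤ q := by rw [hq]; exact le_max_left _ _
  have hq2 : 1 - y ^ 2 ≤ q := by rw [hq]; exact le_max_right _ _
  have hq1 : q ≤ 1 := by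
    rw [hq]; apply max_le (by norm_num)
    have : 0 ≤ y ^ 2 := by positivity
    linarith
  refine ⟨hq0, hq1, ?_, ?_⟩
  · by_cases hS : y < 1
    · nlinarith
    · linarith
  · by_cases hS : y < 1
    · have : y ^ 2 ≤ y := by nlinarith
      have : q * y ^ 2 ≤ 1 * y := by gcongr
      linarith
    · have : 1 - y ^ 2 ≤ 0 := by nlinarith
      have hq0 : q = 0 := by rw [hq]; exact max_eq_left this
      rw [hq0]; simpa using h3

lemma cs_area {c s p11 p12 p21 p22 A0 g b1 b2 : ℝ} (hcs : c ^ 2 + s ^ 2 = 1)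
    (h : A0 ^ 2 + g ^ 2 + b1 ^ 2 + b2 ^ 2 ≤ 1) :
    A0 + g * (p11 * p22 - p12 * p21) + b1 * (-s * p11 + c * p12) + b2 * (-s * p21 + c * p22) ≤
      Real.sqrt (1 + (p11 ^ 2 + p12 ^ 2 + (p21 ^ 2 + p22 ^ 2)) + (p11 * p22 - p12 * p21) ^ 2) := by
  apply Real.le_sqrt_of_sq_le
  set D := p11 * p22 - p12 * p21
  have h1 : (-s * p11 + c * p12) ^ 2 ≤ p11 ^ 2 + p12 ^ 2 := by
    exact proj2 hcs _ _
  have h2 : (-s * p21 + c * p22) ^ 2 ≤ p21 ^ 2 + p22 ^ 2 := by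
    exact proj2 hcs _ _
  set w1 := -s * p11 + c * p12
  set w2 := -s * p21 + c * p22
  have key : (A0 + g * D + b1 * w1 + b2 * w2) ^ 2 ≤
      (A0 ^ 2 + g ^ 2 + b1 ^ 2 + b2 ^ 2) * (1 + D ^ 2 + w1 ^ 2 + w2 ^ 2) := by
    nlinarith [sq_nonneg (A0 * D - g), sq_nonneg (A0 * w1 - b1), sq_nonneg (A0 * w2 - b2),
      sq_nonneg (g * w1 - b1 * D), sq_nonneg (g * w2 - b2 * D), sq_nonneg (b1 * w2 - b2 * w1)]
  have hp : 0 ≤ 1 + D ^ 2 + w1 ^ 2 + w2 ^ 2 := by positivity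
  nlinarith [mul_le_mul_of_nonneg_right h hp]

lemma DG_bound {c s z1 z2 q d lam zn : ℝ} (hcs : c ^ 2 + s ^ 2 = 1) (hlam : 0 < lam)
    (hzn : zn ^ 2 = z1 ^ 2 + z2 ^ 2) (hlt : zn ^ 2 ≤ lam ^ 2)
    (hq : q = 1 - zn ^ 2 / lam ^ 2) (hd : d = 4 * q / lam ^ 2) :
    (q ^ 2 * (-s) - d * (-s * z1 + c * z2) * z1) ^ 2 +
      (q ^ 2 * c - d * (-s * z1 + c * z2) * z2) ^ 2 ≤ 1 := by
  have hl2 : 0 < lam ^ 2 := by positivity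
  have hr1 : zn ^ 2 / lam ^ 2 ≤ 1 := (div_le_one hl2).2 hlt
  have hr0 : 0 ≤ zn ^ 2 / lam ^ 2 := by positivity
  have hq0 : 0 ≤ q := by linarith
  have hq1 : q ≤ 1 := by linarith
  have hd0 : 0 ≤ d := by rw [hd]; positivity
  have hdz : d * zn ^ 2 = 4 * q * (1 - q) := by
    rw [hd, hq]; field_simp; ring
  set k := -s * z1 + c * z2 with hk
  have hk2 : k ^ 2 ≤ zn ^ 2 := by
    rw [hzn]; exact proj2 hcs _ _
  have e : (q ^ 2 * (-s) - d * k * z1) ^ 2 + (q ^ 2 * c - d * k * z2) ^ 2 =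
      q ^ 4 + d * k ^ 2 * (4 * q * (1 - q) - 2 * q ^ 2) := by
    rw [← hdz, hzn, hk]
    linear_combination q ^ 4 * hcs
  rw [e]
  have hq4 : q ^ 4 ≤ 1 := pow_le_one₀ hq0 hq1
  have hdk0 : 0 ≤ d * k ^ 2 := by positivity
  by_cases hcase : 4 * q * (1 - q) - 2 * q ^ 2 ≤ 0
  · nlinarith
  · have h1 : d * k ^ 2 ≤ 4 * q * (1 - q) := by
      rw [← hdz]; gcongr
    have h2 : d * k ^ 2 * (4 * q * (1 - q) - 2 * q ^ 2) ≤
        4 * q * (1 - q) * (4 * q * (1 - q) - 2 * q ^ 2) := by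
      apply mul_le_mul_of_nonneg_right h1; linarith
    have h3 : q ^ 4 + 4 * q * (1 - q) * (4 * q * (1 - q) - 2 * q ^ 2) = (5 * q ^ 2 - 4 * q) ^ 2 := by
      ring
    have h4 : (5 * q ^ 2 - 4 * q) ^ 2 ≤ 1 := by
      rw [sq_le_one_iff_abs_le_one, abs_le]
      constructor <;> nlinarith [sq_nonneg (5 * q - 2)]
    linarith

lemma pointwiseA {c s v1 v2 p11 p12 p21 p22 lam A0 B0 φ ψ a curl M q d zn : ℝ}
    (hcs : c ^ 2 + s ^ 2 = 1) (hlam : 0 < lam) (hlam4 : lam ≤ 1 / 4)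
    (hA0 : 0 ≤ A0) (hB0 : 0 ≤ B0) (hAB : A0 ^ 2 + B0 ^ 2 ≤ 1) (hφ : 0 ≤ φ) (hψ : 0 ≤ ψ)
    (hφψ : φ ^ 2 + ψ ^ 2 ≤ 1) (hcu0 : 0 ≤ curl) (hcu1 : curl ≤ 1)
    (hT : 1 - 2 * lam ≤ v1 ^ 2 + v2 ^ 2 → curl = 0 ∧ a * (v1 ^ 2 + v2 ^ 2) = M)
    (ha : a ^ 2 * (v1 ^ 2 + v2 ^ 2) ≤ 1 / 4) (hM0 : 0 ≤ M) (hM1 : M ≤ 1 / 2)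
    (hzn0 : 0 ≤ zn) (hzn : zn ^ 2 = (v1 - c) ^ 2 + (v2 - s) ^ 2)
    (hq : q = max 0 (1 - zn ^ 2 / lam ^ 2)) (hd : d = 4 * q / lam ^ 2) :
    (1 - lam) * (A0 * (1 - zn / lam) +
      B0 * ((q ^ 2 * (-s) - d * (-s * (v1 - c) + c * (v2 - s)) * (v1 - c)) * (-s * p11 + c * p12) +
        (q ^ 2 * c - d * (-s * (v1 - c) + c * (v2 - s)) * (v2 - s)) * (-s * p21 + c * p22)))
    + φ * curl * (p11 * p22 - p12 * p21)
    - ψ * (a * (v1 * (-s * p21 + c * p22) - v2 * (-s * p11 + c * p12)) -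
        M * (-s * (-s * p11 + c * p12) + c * (-s * p21 + c * p22)))
    ≤ Real.sqrt (1 + (p11 ^ 2 + p12 ^ 2 + (p21 ^ 2 + p22 ^ 2)) + (p11 * p22 - p12 * p21) ^ 2) := by
  have hl2 : 0 < lam ^ 2 := by positivity
  have hψ1 : ψ ^ 2 ≤ 1 := by nlinarith
  have hφ1 : φ ^ 2 ≤ 1 := by nlinarith
  set k := -s * (v1 - c) + c * (v2 - s) with hk
  set b1 := q ^ 2 * (-s) - d * k * (v1 - c) with hb1
  set b2 := q ^ 2 * c - d * k * (v2 - s) with hb2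
  by_cases hS : zn < lam
  · -- near the graph
    have hlt : zn ^ 2 ≤ lam ^ 2 := by gcongr
    have hr1 : zn ^ 2 / lam ^ 2 ≤ 1 := (div_le_one hl2).2 hlt
    have hq' : q = 1 - zn ^ 2 / lam ^ 2 := by rw [hq]; apply max_eq_right; linarith
    have hb := DG_bound hcs hlam hzn hlt hq' hd
    rw [← hk, ← hb1, ← hb2] at hb
    have ht : (1 - lam) ^ 2 ≤ v1 ^ 2 + v2 ^ 2 := by
      exact near_t hcs hlam4 hzn0 hzn hS
    obtain ⟨hc0, hat⟩ := hT (by linarith [sq_nonneg lam, show (1 - lam) ^ 2 = 1 - 2 * lam + lam ^ 2 by ring])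
    have h1 : A0 + 0 * (p11 * p22 - p12 * p21) + (B0 * b1) * (-s * p11 + c * p12) +
        (B0 * b2) * (-s * p21 + c * p22) ≤ _ := cs_area (p11 := p11) (p12 := p12) (p21 := p21)
          (p22 := p22) hcs (by
          have := mul_le_mul_of_nonneg_left hb (sq_nonneg B0)
          linarith [show (B0 * b1) ^ 2 + (B0 * b2) ^ 2 = B0 ^ 2 * (b1 ^ 2 + b2 ^ 2) by ring])
    have htpos : 1 / 4 ≤ v1 ^ 2 + v2 ^ 2 := by linarith [sq_nonneg lam, show (1 - lam) ^ 2 = 1 - 2 * lam + lam ^ 2 by ring]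
    have hF := near_F hcs hzn0 hzn hS hat hM0 hM1 htpos
    have h2 : 0 + 0 * (p11 * p22 - p12 * p21) +
        (ψ * (a * v2 - M * s) / lam) * (-s * p11 + c * p12) +
        (ψ * (-a * v1 + M * c) / lam) * (-s * p21 + c * p22) ≤ _ :=
        cs_area (p11 := p11) (p12 := p12) (p21 := p21) (p22 := p22) hcs (by
          have : (ψ * (a * v2 - M * s) / lam) ^ 2 + (ψ * (-a * v1 + M * c) / lam) ^ 2 =
            ψ ^ 2 * (((a * v2 - M * s) ^ 2 + (-a * v1 + M * c) ^ 2) / lam ^ 2) := by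
            field_simp
          have h3 : ((a * v2 - M * s) ^ 2 + (-a * v1 + M * c) ^ 2) / lam ^ 2 ≤ 1 :=
            (div_le_one hl2).2 hF
          have h4 : ψ ^ 2 * (((a * v2 - M * s) ^ 2 + (-a * v1 + M * c) ^ 2) / lam ^ 2) ≤ 1 * 1 := by
            gcongr
          linarith)
    set R := Real.sqrt (1 + (p11 ^ 2 + p12 ^ 2 + (p21 ^ 2 + p22 ^ 2)) +
      (p11 * p22 - p12 * p21) ^ 2)
    set w1 := -s * p11 + c * p12
    set w2 := -s * p21 + c * p22
    have h2' : ψ * (a * v2 - M * s) * w1 + ψ * (-a * v1 + M * c) * w2 ≤ lam * R := by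
      have := mul_le_mul_of_nonneg_left h2 hlam.le
      have e : lam * (0 + 0 * (p11 * p22 - p12 * p21) + (ψ * (a * v2 - M * s) / lam) * w1 +
        (ψ * (-a * v1 + M * c) / lam) * w2) =
        ψ * (a * v2 - M * s) * w1 + ψ * (-a * v1 + M * c) * w2 := by
        field_simp; ring
      linarith
    have h1' := mul_le_mul_of_nonneg_left h1 (show 0 ≤ 1 - lam by linarith)
    have h5 : 0 ≤ (1 - lam) * (A0 * (zn / lam)) := by
      have : 0 ≤ 1 - lam := by linarith
      positivity
    rw [hc0]
    linarith
  · -- far from the graph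
    push Not at hS
    have hge : lam ^ 2 ≤ zn ^ 2 := by gcongr
    have hr1 : 1 ≤ zn ^ 2 / lam ^ 2 := (one_le_div hl2).2 hge
    have hq0 : q = 0 := by rw [hq]; apply max_eq_left; linarith
    have hd0 : d = 0 := by rw [hd, hq0]; simp
    have hb10 : b1 = 0 := by rw [hb1, hq0, hd0]; ring
    have hb20 : b2 = 0 := by rw [hb2, hq0, hd0]; ring
    have hz1 : 1 ≤ zn / lam := (one_le_div hlam).2 hS
    have h1 : (1 - lam) * (A0 * (1 - zn / lam)) ≤ 0 := by
      have : 0 ≤ (1 - lam) * A0 := by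
        have : 0 ≤ 1 - lam := by linarith
        positivity
      nlinarith
    have hF := far_F hcs ha hM0 hM1
    have h2 : 0 + (φ * curl) * (p11 * p22 - p12 * p21) +
        (ψ * (a * v2 - M * s)) * (-s * p11 + c * p12) +
        (ψ * (-a * v1 + M * c)) * (-s * p21 + c * p22) ≤ _ :=
        cs_area (p11 := p11) (p12 := p12) (p21 := p21) (p22 := p22) hcs (by
          have e1 : (φ * curl) ^ 2 ≤ φ ^ 2 := by
            rw [mul_pow]
            have : curl ^ 2 ≤ 1 := pow_le_one₀ hcu0 hcu1
            have := mul_le_mul_of_nonneg_left this (sq_nonneg φ)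
            linarith
          have e2 := mul_le_mul_of_nonneg_left hF (sq_nonneg ψ)
          linarith [show (ψ * (a * v2 - M * s)) ^ 2 + (ψ * (-a * v1 + M * c)) ^ 2 =
            ψ ^ 2 * ((a * v2 - M * s) ^ 2 + (-a * v1 + M * c) ^ 2) by ring])
    rw [hb10, hb20]
    linarith

lemma pw_qn {q n zn : ℝ} (hq0 : 0 ≤ q) (hq1 : q ≤ 1) (hz : 0 ≤ zn) (hn : -zn ≤ n) :
    -zn ≤ q * n := by
  have h1 := mul_le_mul_of_nonneg_left hn hq0
  have h2 := mul_le_mul_of_nonneg_right hq1 hz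
  linarith

lemma pw_q2 {q y : ℝ} (hq0 : 0 ≤ q) (hq1 : q ≤ 1) (h : 1 - q ≤ y) :
    -(2 * y) ≤ q ^ 2 - 1 := by
  have h1 := mul_nonneg hq0 (show 0 ≤ 1 - q by linarith)
  linarith [show q * (1 - q) = q - q ^ 2 by ring, show (q - 1) ^ 2 = q ^ 2 - 2 * q + 1 by ring,
    sq_nonneg (q - 1)]

lemma pw_H2 {b B h X lam : ℝ} (hb : 0 ≤ b) (hbB : b ≤ B) (hh : 0 ≤ h) (hX : -h ≤ X)
    (hlam : 0 < lam) (hlam4 : lam ≤ 1 / 4) : -(B * h) ≤ (1 - lam) * (b * X) := by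
  have e1 := mul_le_mul_of_nonneg_left hX hb
  have e2 := mul_le_mul_of_nonneg_right hbB hh
  have e3 : 0 ≤ b * h := mul_nonneg hb hh
  have e4 : (1 - lam) * (-(b * h)) ≤ (1 - lam) * (b * X) :=
    mul_le_mul_of_nonneg_left (by linarith) (by linarith)
  have e5 : 0 ≤ lam * (b * h) := mul_nonneg hlam.le e3
  linarith

lemma pw_Az {A0 B0 y lam : ℝ} (hA0 : 0 ≤ A0) (hAB : A0 ^ 2 + B0 ^ 2 ≤ 1) (hy : 0 ≤ y)
    (hlam : 0 < lam) (hlam4 : lam ≤ 1 / 4) : (1 - lam) * (A0 * y) ≤ y := by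
  have : A0 ≤ 1 := by nlinarith [sq_nonneg B0]
  have e := mul_le_mul_of_nonneg_right this hy
  have e1 : 0 ≤ A0 * y := mul_nonneg hA0 hy
  have e5 : 0 ≤ lam * (A0 * y) := mul_nonneg hlam.le e1
  linarith

lemma pw_ident {c s r v1 v2 w1 w2 D lam A0 b φ ψ a curl M q d y zl : ℝ}
    (hcs : c ^ 2 + s ^ 2 = 1) :
    (1 - lam) * (A0 + b) + M * y +
     ((1 - lam) * (b * (-(c * (q ^ 2 * (v1 - c)) + s * (q ^ 2 * (v2 - s))) +
      ((q ^ 2 * (-s) - d * (-s * (v1 - c) + c * (v2 - s)) * (v1 - c)) * (r * w1 + s) +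
        (q ^ 2 * c - d * (-s * (v1 - c) + c * (v2 - s)) * (v2 - s)) * (r * w2 - c))))
    + (φ * curl * D - ψ * (a * (v1 * w2 - v2 * w1)))
    + M * (-y * (c * v1 + s * v2) + ψ * (-s * w1 + c * w2)))
    = ((1 - lam) * (A0 * (1 - zl) +
      (b * r) * ((q ^ 2 * (-s) - d * (-s * (v1 - c) + c * (v2 - s)) * (v1 - c)) * w1 +
        (q ^ 2 * c - d * (-s * (v1 - c) + c * (v2 - s)) * (v2 - s)) * w2))
    + φ * curl * D
    - ψ * (a * (v1 * w2 - v2 * w1) - M * (-s * w1 + c * w2)))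
    + (1 - lam) * (A0 * zl)
    - (1 - lam) * (b * (q ^ 2 * (c * (v1 - c) + s * (v2 - s)) + (q ^ 2 - 1)
        - d * (-s * (v1 - c) + c * (v2 - s)) ^ 2))
    - M * y * (c * (v1 - c) + s * (v2 - s)) := by
  linear_combination ((1 - lam) * b * (-q ^ 2) - M * y) * hcs

lemma pointwise {c s r v1 v2 p11 p12 p21 p22 lam A0 B0 φ ψ a curl M q d zn B : ℝ}
    (hcs : c ^ 2 + s ^ 2 = 1) (hr : 0 < r) (hlam : 0 < lam) (hlam4 : lam ≤ 1 / 4)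
    (hA0 : 0 ≤ A0) (hB0 : 0 ≤ B0) (hAB : A0 ^ 2 + B0 ^ 2 ≤ 1) (hφ : 0 ≤ φ) (hψ : 0 ≤ ψ)
    (hφψ : φ ^ 2 + ψ ^ 2 ≤ 1) (hcu0 : 0 ≤ curl) (hcu1 : curl ≤ 1)
    (hT : 1 - 2 * lam ≤ v1 ^ 2 + v2 ^ 2 → curl = 0 ∧ a * (v1 ^ 2 + v2 ^ 2) = M)
    (ha : a ^ 2 * (v1 ^ 2 + v2 ^ 2) ≤ 1 / 4) (hM0 : 0 ≤ M) (hM1 : M ≤ 1 / 2)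
    (hzn0 : 0 ≤ zn) (hzn : zn ^ 2 = (v1 - c) ^ 2 + (v2 - s) ^ 2)
    (hq : q = max 0 (1 - zn ^ 2 / lam ^ 2)) (hd : d = 4 * q / lam ^ 2)
    (hψr : ψ / r ≤ 1) (hBr : B0 / r ≤ B) :
    (1 - lam) * (A0 + B0 / r) + M * (ψ / r) +
     ((1 - lam) * ((B0 / r) * (-(c * (q ^ 2 * (v1 - c)) + s * (q ^ 2 * (v2 - s))) +
      ((q ^ 2 * (-s) - d * (-s * (v1 - c) + c * (v2 - s)) * (v1 - c)) *
          (r * (-s * p11 + c * p12) + s) +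
        (q ^ 2 * c - d * (-s * (v1 - c) + c * (v2 - s)) * (v2 - s)) *
          (r * (-s * p21 + c * p22) - c))))
    + (φ * curl * (p11 * p22 - p12 * p21)
      - ψ * (a * (v1 * (-s * p21 + c * p22) - v2 * (-s * p11 + c * p12))))
    + M * (ψ * (-(c * v1 + s * v2) / r +
        (-s * (-s * p11 + c * p12) + c * (-s * p21 + c * p22)))))
    ≤ Real.sqrt (1 + (p11 ^ 2 + p12 ^ 2 + (p21 ^ 2 + p22 ^ 2)) + (p11 * p22 - p12 * p21) ^ 2) +
      (1 / lam + B * (1 + 6 / lam) + 1) * zn := by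
  have hA := pointwiseA (p11 := p11) (p12 := p12) (p21 := p21) (p22 := p22)
    hcs hlam hlam4 hA0 hB0 hAB hφ hψ hφψ hcu0 hcu1 hT ha hM0 hM1 hzn0 hzn hq hd
  have hl2 : 0 < lam ^ 2 := by positivity
  obtain ⟨hq0, hq1, h1q, hqz⟩ := q_bounds hlam hzn0 hq
  have hn2 : (c * (v1 - c) + s * (v2 - s)) ^ 2 ≤ zn ^ 2 := by
    rw [hzn]; exact proj1 hcs _ _
  have hk2 : (-s * (v1 - c) + c * (v2 - s)) ^ 2 ≤ zn ^ 2 := by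
    rw [hzn]; exact proj2 hcs _ _
  have hnabs := (abs_le.1 (abs_le_of_sq_le_sq hn2 hzn0)).1
  have hdk : d * (-s * (v1 - c) + c * (v2 - s)) ^ 2 ≤ 4 * (zn / lam) := by
    have hd0 : 0 ≤ d := by rw [hd]; positivity
    have e1 := mul_le_mul_of_nonneg_left hk2 hd0
    have e2 : d * zn ^ 2 = 4 * (q * (zn / lam) ^ 2) := by rw [hd]; field_simp
    linarith
  have hy : 0 ≤ zn / lam := by positivity
  have hH : -((1 + 6 / lam) * zn) ≤ q ^ 2 * (c * (v1 - c) + s * (v2 - s)) + (q ^ 2 - 1)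
      - d * (-s * (v1 - c) + c * (v2 - s)) ^ 2 := by
    have e1 := pw_qn (sq_nonneg q) (pow_le_one₀ hq0 hq1) hzn0 hnabs
    have e2 := pw_q2 hq0 hq1 h1q
    have e3 : (1 + 6 / lam) * zn = zn + 2 * (zn / lam) + 4 * (zn / lam) := by field_simp; ring
    linarith
  have hBr0 : 0 ≤ B0 / r := by positivity
  have hH2 := pw_H2 hBr0 hBr (show 0 ≤ (1 + 6 / lam) * zn by positivity) hH hlam hlam4
  have hψr0 : 0 ≤ ψ / r := by positivity
  have hM : -zn ≤ M * (ψ / r) * (c * (v1 - c) + s * (v2 - s)) :=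
    pw_qn (by positivity) (mul_le_one₀ (by linarith) hψr0 hψr) hzn0 hnabs
  have hAz := pw_Az hA0 hAB hy hlam hlam4
  have e1 : (B0 / r) * r = B0 := by field_simp
  have e2 : ψ * (-(c * v1 + s * v2) / r +
        (-s * (-s * p11 + c * p12) + c * (-s * p21 + c * p22))) =
      -(ψ / r) * (c * v1 + s * v2) +
        ψ * (-s * (-s * p11 + c * p12) + c * (-s * p21 + c * p22)) := by field_simp
  rw [e2, pw_ident (zl := zn / lam) hcs, e1]
  have : (1 / lam + B * (1 + 6 / lam) + 1) * zn = zn / lam + B * ((1 + 6 / lam) * zn) + zn := by ring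
  rw [this]
  clear this e2 hzn hq hd
  linarith only [hA, hH2, hM, hAz]


/-! ### Scalar cut-off functions -/

/-- Powers of the positive part. -/
def pp (k : ℕ) (t : ℝ) : ℝ := (max 0 t) ^ k

lemma pp_nonneg (k : ℕ) (t : ℝ) : 0 ≤ pp k t := pow_nonneg (le_max_left _ _) _

lemma pp_hasDerivAt (k : ℕ) (t : ℝ) : HasDerivAt (pp (k + 2)) ((k + 2) * pp (k + 1) t) t := by
  rcases lt_trichotomy t 0 with h | h | h
  · have e : pp (k + 1) t = 0 := by simp [pp, max_eq_left h.le]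
    rw [e, mul_zero]
    apply (hasDerivAt_const t (0 : ℝ)).congr_of_eventuallyEq
    filter_upwards [Iio_mem_nhds h] with y hy
    have hy' : y < 0 := hy
    simp [pp, max_eq_left hy'.le]
  · subst h
    have e : pp (k + 1) 0 = 0 := by simp [pp]
    rw [e, mul_zero]
    rw [hasDerivAt_iff_isLittleO_nhds_zero]
    simp only [zero_add, smul_zero, sub_zero]
    have e2 : pp (k + 2) 0 = 0 := by simp [pp]
    rw [e2]
    simp only [sub_zero]
    have h1 : pp (k + 2) =O[𝓝 0] fun h : ℝ => h ^ (k + 2) := by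
      apply Asymptotics.IsBigO.of_bound 1
      filter_upwards with y
      rw [pp, norm_pow, norm_pow, one_mul]
      gcongr
      rw [Real.norm_eq_abs, Real.norm_eq_abs, abs_of_nonneg (le_max_left _ _)]
      exact max_le (abs_nonneg _) (le_abs_self _)
    apply h1.trans_isLittleO
    have := Asymptotics.isLittleO_pow_id (𝕜 := ℝ) (n := k + 2) (by omega)
    exact this
  · have e : pp (k + 1) t = t ^ (k + 1) := by simp [pp, max_eq_right h.le]
    rw [e]
    have := hasDerivAt_pow (k + 2) t
    apply (this.congr_deriv (by push_cast; simp)).congr_of_eventuallyEq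
    filter_upwards [Ioi_mem_nhds h] with y hy
    have hy' : 0 < y := hy
    simp [pp, max_eq_right hy'.le]

lemma pp_continuous (k : ℕ) : Continuous (pp k) := by unfold pp; fun_prop

lemma pp_contDiff (k : ℕ) : ContDiff ℝ 1 (pp (k + 2)) := by
  rw [contDiff_one_iff_deriv]
  refine ⟨fun t => (pp_hasDerivAt k t).differentiableAt, ?_⟩
  rw [show deriv (pp (k + 2)) = fun t => (k + 2) * pp (k + 1) t from
    funext fun t => (pp_hasDerivAt k t).deriv]
  exact continuous_const.mul (pp_continuous _)

/-- Radial cut-off as a function of `‖x‖²`. -/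
def Ph (t : ℝ) : ℝ := pp 3 (1 - pp 3 ((t - 1) / 325))

/-- Minus the derivative of `Ph`. -/
def mm (t : ℝ) : ℝ := 9 / 325 * (pp 2 (1 - pp 3 ((t - 1) / 325)) * pp 2 ((t - 1) / 325))

lemma Ph_hasDerivAt (t : ℝ) : HasDerivAt Ph (-mm t) t := by
  have h0 : HasDerivAt (fun t : ℝ => (t - 1) / 325) (1 / 325) t :=
    ((hasDerivAt_id t).sub_const 1).div_const 325
  have h1 := (pp_hasDerivAt 1 ((t - 1) / 325)).comp t h0
  have h2 := (pp_hasDerivAt 1 (1 - pp 3 ((t - 1) / 325))).comp t (h1.const_sub 1)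
  exact h2.congr_deriv (by simp only [mm]; norm_num; ring)

lemma Ph_contDiff : ContDiff ℝ 1 Ph := by
  have h := pp_contDiff 1
  norm_num at h
  unfold Ph
  have : ContDiff ℝ 1 fun t : ℝ => (t - 1) / 325 := by fun_prop
  exact h.comp (contDiff_const.sub (h.comp this))

lemma mm_contDiff : ContDiff ℝ 1 mm := by
  have h := pp_contDiff 1
  have h2 := pp_contDiff 0
  norm_num at h h2
  unfold mm
  have : ContDiff ℝ 1 fun t : ℝ => (t - 1) / 325 := by fun_prop
  exact contDiff_const.mul ((h2.comp (contDiff_const.sub (h.comp this))).mul (h2.comp this))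

lemma mm_nonneg (t : ℝ) : 0 ≤ mm t :=
  mul_nonneg (by norm_num) (mul_nonneg (pp_nonneg _ _) (pp_nonneg _ _))

lemma Ph_nonneg (t : ℝ) : 0 ≤ Ph t := pp_nonneg _ _

lemma Ph_small {t : ℝ} (h : t ≤ 1) : Ph t = 1 := by
  have : max 0 ((t - 1) / 325) = 0 := max_eq_left (by linarith)
  simp [Ph, pp, this]

lemma mm_small {t : ℝ} (h : t ≤ 1) : mm t = 0 := by
  have : max 0 ((t - 1) / 325) = 0 := max_eq_left (by linarith)
  simp [mm, pp, this]

lemma big_aux {t : ℝ} (h : 326 ≤ t) : max 0 (1 - pp 3 ((t - 1) / 325)) = 0 := by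
  apply max_eq_left
  have : 1 ≤ max 0 ((t - 1) / 325) := le_max_of_le_right (by linarith)
  have : 1 ≤ pp 3 ((t - 1) / 325) := one_le_pow₀ this
  linarith

lemma Ph_big {t : ℝ} (h : 326 ≤ t) : Ph t = 0 := by
  have := big_aux h
  simp only [Ph]; rw [pp, this]; norm_num

lemma mm_big {t : ℝ} (h : 326 ≤ t) : mm t = 0 := by
  have := big_aux h
  simp only [mm]; rw [pp, this]; norm_num

lemma Ph_mm_aux {w p y : ℝ} (hw0 : 0 ≤ w) (hw1 : w ≤ 1) (hp : p = 1 - w ^ 3)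
    (hy : 324 * y ≤ 325 ^ 2) (hy0 : 0 ≤ y) :
    (p ^ 3) ^ 2 + 4 * y * (9 / 325 * (p ^ 2 * w ^ 2)) ^ 2 ≤ 1 := by
  have hw3 : w ^ 3 ≤ 1 := pow_le_one₀ hw0 hw1
  have hw30 : 0 ≤ w ^ 3 := by positivity
  have hp0 : 0 ≤ p := by linarith
  have hp1 : p ≤ 1 := by linarith
  have e1 : 4 * y * (9 / 325 * (p ^ 2 * w ^ 2)) ^ 2 = (324 * y / 325 ^ 2) * (p ^ 4 * w ^ 4) := by
    ring
  have e2 : 324 * y / 325 ^ 2 ≤ 1 := by rw [div_le_one (by norm_num)]; exact hy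
  have e3 : (324 * y / 325 ^ 2) * (p ^ 4 * w ^ 4) ≤ 1 * (1 * w ^ 4) := by
    gcongr
    exact pow_le_one₀ hp0 hp1
  have e4 : w ^ 4 ≤ w ^ 3 := pow_le_pow_of_le_one hw0 hw1 (by norm_num)
  have e5 : (p ^ 3) ^ 2 ≤ p := by
    rw [← pow_mul]
    calc p ^ (3 * 2) ≤ p ^ 1 := pow_le_pow_of_le_one hp0 hp1 (by norm_num)
      _ = p := pow_one p
  linarith

/-- `φ² + ψ² ≤ 1` with `ψ = 2 ρ m(ρ²)`. -/
lemma Ph_mm {r : ℝ} : Ph (r ^ 2) ^ 2 + (2 * r * mm (r ^ 2)) ^ 2 ≤ 1 := by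
  by_cases h : r ^ 2 ≤ 1
  · rw [Ph_small h, mm_small h]; norm_num
  · by_cases h2 : 326 ≤ r ^ 2
    · rw [Ph_big h2, mm_big h2]; norm_num
    · push Not at h h2
      have hw : max 0 ((r ^ 2 - 1) / 325) = (r ^ 2 - 1) / 325 := max_eq_right (by linarith)
      have hw1 : (r ^ 2 - 1) / 325 ≤ 1 := by linarith
      have hw0 : 0 ≤ (r ^ 2 - 1) / 325 := by linarith
      have hw3 : ((r ^ 2 - 1) / 325) ^ 3 ≤ 1 := pow_le_one₀ hw0 hw1
      have hp : max 0 (1 - ((r ^ 2 - 1) / 325) ^ 3) = 1 - ((r ^ 2 - 1) / 325) ^ 3 :=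
        max_eq_right (by linarith)
      have := Ph_mm_aux hw0 hw1 rfl (y := r ^ 2) (by nlinarith) (by positivity)
      simp only [Ph, mm, pp]
      rw [hw, hp]
      rw [mul_pow, mul_pow]
      norm_num at this ⊢
      linarith

lemma two_mm_le (t : ℝ) : 2 * mm t ≤ 1 := by
  by_cases h : t ≤ 1
  · rw [mm_small h]; norm_num
  · push Not at h
    have h1 := Ph_mm (r := √t)
    rw [Real.sq_sqrt (by linarith)] at h1
    have h2 : (2 * √t * mm t) ^ 2 = t * (2 * mm t) ^ 2 := by
      rw [mul_pow, mul_pow, Real.sq_sqrt (by linarith)]; ring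
    rw [h2] at h1
    have h3 : (2 * mm t) ^ 2 ≤ t * (2 * mm t) ^ 2 := by
      have := sq_nonneg (2 * mm t)
      nlinarith
    have h4 := mm_nonneg t
    have h5 := sq_nonneg (Ph t)
    nlinarith

/-! The profile `a`. -/

/-- Auxiliary spline. -/
def kk (lam t : ℝ) : ℝ := (pp 2 (t - (1 - 3 * lam)) - pp 2 (t - (1 - 2 * lam))) / (4 * lam)

/-- Half derivative of `kk`, doubled. -/
def kd (lam t : ℝ) : ℝ := (pp 1 (t - (1 - 3 * lam)) - pp 1 (t - (1 - 2 * lam))) / lam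

/-- The profile of the area primitive. -/
def aa (lam t : ℝ) : ℝ := 1 / 2 - kk lam t / t

lemma kk_hasDerivAt (lam t : ℝ) : HasDerivAt (kk lam) (kd lam t / 2) t := by
  have h1 := (pp_hasDerivAt 0 (t - (1 - 3 * lam))).comp t ((hasDerivAt_id t).sub_const _)
  have h2 := (pp_hasDerivAt 0 (t - (1 - 2 * lam))).comp t ((hasDerivAt_id t).sub_const _)
  exact ((h1.sub h2).div_const (4 * lam)).congr_deriv (by simp only [kd]; norm_num; ring)

lemma kk_contDiff (lam : ℝ) : ContDiff ℝ 1 (kk lam) := by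
  have h2 := pp_contDiff 0
  norm_num at h2
  unfold kk
  exact ((h2.comp (contDiff_id.sub contDiff_const)).sub
    (h2.comp (contDiff_id.sub contDiff_const))).div_const _

lemma kk_small {lam t : ℝ} (hlam : 0 < lam) (h : t ≤ 1 - 3 * lam) : kk lam t = 0 := by
  have e1 : max 0 (t - (1 - 3 * lam)) = 0 := max_eq_left (by linarith)
  have e2 : max 0 (t - (1 - 2 * lam)) = 0 := max_eq_left (by linarith)
  simp only [kk, pp]; rw [e1, e2]; simp

lemma kd_small {lam t : ℝ} (hlam : 0 < lam) (h : t ≤ 1 - 3 * lam) : kd lam t = 0 := by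
  have e1 : max 0 (t - (1 - 3 * lam)) = 0 := max_eq_left (by linarith)
  have e2 : max 0 (t - (1 - 2 * lam)) = 0 := max_eq_left (by linarith)
  simp only [kd, pp]; rw [e1, e2]; simp

lemma aa_ev {lam : ℝ} (hlam : 0 < lam) (hlam4 : lam ≤ 1 / 4) :
    aa lam =ᶠ[𝓝 0] fun _ => 1 / 2 := by
  filter_upwards [Iio_mem_nhds (show (0 : ℝ) < 1 / 4 by norm_num)] with t ht
  have : t < 1 / 4 := ht
  simp [aa, kk_small hlam (show t ≤ 1 - 3 * lam by linarith)]

lemma aa_contDiff {lam : ℝ} (hlam : 0 < lam) (hlam4 : lam ≤ 1 / 4) : ContDiff ℝ 1 (aa lam) := by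
  rw [contDiff_iff_contDiffAt]
  intro t
  by_cases h : t = 0
  · subst h
    exact (contDiffAt_const (c := (1 / 2 : ℝ))).congr_of_eventuallyEq (aa_ev hlam hlam4)
  · unfold aa
    exact contDiffAt_const.sub ((kk_contDiff lam).contDiffAt.div contDiffAt_id h)

lemma aa_hasDerivAt {lam : ℝ} (hlam : 0 < lam) (hlam4 : lam ≤ 1 / 4) (t : ℝ) :
    ∃ a', HasDerivAt (aa lam) a' t ∧ 2 * aa lam t + 2 * (t * a') = 1 - kd lam t := by
  by_cases h : t = 0
  · subst h
    refine ⟨0, (hasDerivAt_const (0 : ℝ) (1 / 2 : ℝ)).congr_of_eventuallyEq (aa_ev hlam hlam4), ?_⟩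
    rw [kd_small hlam (by linarith)]; simp [aa]
  · refine ⟨_, ((kk_hasDerivAt lam t).div (hasDerivAt_id t) h).const_sub (1 / 2), ?_⟩
    simp only [aa, id]; field_simp; ring

lemma kd_bounds {lam : ℝ} (hlam : 0 < lam) (t : ℝ) : 0 ≤ kd lam t ∧ kd lam t ≤ 1 := by
  have h1 : pp 1 (t - (1 - 2 * lam)) ≤ pp 1 (t - (1 - 3 * lam)) := by
    simp only [pp, pow_one]; apply max_le_max le_rfl; linarith
  have h2 : pp 1 (t - (1 - 3 * lam)) ≤ pp 1 (t - (1 - 2 * lam)) + lam := by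
    simp only [pp, pow_one]
    apply max_le
    · have := le_max_left 0 (t - (1 - 2 * lam)); linarith
    · have := le_max_right 0 (t - (1 - 2 * lam)); linarith
  unfold kd
  exact ⟨div_nonneg (by linarith) hlam.le, (div_le_one hlam).2 (by linarith)⟩

lemma aa_big {lam t : ℝ} (hlam : 0 < lam) (hlam4 : lam ≤ 1 / 4) (h : 1 - 2 * lam ≤ t) :
    1 - kd lam t = 0 ∧ aa lam t * t = 1 / 2 - 5 * lam / 4 := by
  have e1 : max 0 (t - (1 - 3 * lam)) = t - (1 - 3 * lam) := max_eq_right (by linarith)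
  have e2 : max 0 (t - (1 - 2 * lam)) = t - (1 - 2 * lam) := max_eq_right (by linarith)
  have ht : t ≠ 0 := by intro h0; linarith
  simp only [kd, aa, kk, pp]; rw [e1, e2]
  constructor
  · field_simp; ring
  · field_simp; ring

lemma aa_sq {lam t : ℝ} (hlam : 0 < lam) (hlam4 : lam ≤ 1 / 4) (ht : 0 ≤ t) :
    aa lam t ^ 2 * t ≤ 1 / 4 := by
  by_cases h1 : t ≤ 1 - 3 * lam
  · simp only [aa]; rw [kk_small hlam h1]; norm_num; linarith
  push Not at h1
  have htp : 0 < t := by linarith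
  by_cases h2 : 1 - 2 * lam ≤ t
  · obtain ⟨-, h3⟩ := aa_big hlam hlam4 h2
    have e : aa lam t ^ 2 * t = (aa lam t * t) ^ 2 / t := by field_simp
    rw [e, h3, div_le_iff₀ htp]
    nlinarith
  · push Not at h2
    have e1 : max 0 (t - (1 - 3 * lam)) = t - (1 - 3 * lam) := max_eq_right (by linarith)
    have e2 : max 0 (t - (1 - 2 * lam)) = 0 := max_eq_left (by linarith)
    have e3 : 0 ≤ kk lam t := by
      simp only [kk, pp]; rw [e1, e2]
      have := sq_nonneg (t - (1 - 3 * lam))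
      apply div_nonneg <;> linarith
    have e4 : kk lam t ≤ t / 2 := by
      simp only [kk, pp]; rw [e1, e2, div_le_iff₀ (by positivity)]
      nlinarith
    have e5 : 0 ≤ kk lam t / t := by positivity
    have e6 : kk lam t / t ≤ 1 / 2 := by rw [div_le_iff₀ htp]; linarith
    have e7 : aa lam t ^ 2 ≤ 1 / 4 := by simp only [aa]; nlinarith
    have e8 : t ≤ 1 := by linarith
    calc aa lam t ^ 2 * t ≤ 1 / 4 * 1 := by gcongr
      _ = 1 / 4 := by norm_num


/-! ### Null Lagrangians -/

lemma coord_hasFDerivAt (i : Fin 2) (x : V2) :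
    HasFDerivAt (fun y : V2 => y i) (EuclideanSpace.proj i : V2 →L[ℝ] ℝ) x :=
  (EuclideanSpace.proj i : V2 →L[ℝ] ℝ).hasFDerivAt

lemma hmul' {f g : V2 → ℝ} {f' g' : V2 →L[ℝ] ℝ} {x : V2} (hf : HasFDerivAt f f' x)
    (hg : HasFDerivAt g g' x) : HasFDerivAt (fun y => f y * g y) (f x • g' + g x • f') x :=
  hf.mul hg

lemma hsub' {f g : V2 → ℝ} {f' g' : V2 →L[ℝ] ℝ} {x : V2} (hf : HasFDerivAt f f' x)
    (hg : HasFDerivAt g g' x) : HasFDerivAt (fun y => f y - g y) (f' - g') x :=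
  hf.sub hg

lemma hadd' {f g : V2 → ℝ} {f' g' : V2 →L[ℝ] ℝ} {x : V2} (hf : HasFDerivAt f f' x)
    (hg : HasFDerivAt g g' x) : HasFDerivAt (fun y => f y + g y) (f' + g') x :=
  hf.add hg

lemma hcomp' {k : ℝ → ℝ} {k' : ℝ} {f : V2 → ℝ} {f' : V2 →L[ℝ] ℝ} {x : V2}
    (hk : HasDerivAt k k' (f x)) (hf : HasFDerivAt f f' x) :
    HasFDerivAt (fun y => k (f y)) (k' • f') x :=
  hk.comp_hasFDerivAt x hf

lemma contDiffAt_normSq (x : V2) : ContDiffAt ℝ 1 (fun y : V2 => ‖y‖ ^ 2) x :=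
  (contDiff_norm_sq ℝ).contDiffAt

lemma null_radial {k : ℝ → ℝ} {h : V2 → ℝ} {l R ε : ℝ} (hR0 : 0 < R) (hR : R < l) (hε : 0 < ε)
    (hk : ∀ t, 0 < t → ContDiffAt ℝ 1 k t) (hk0 : ∀ t, t < ε → k t = 0)
    (hk1 : ∀ t, R ^ 2 < t → k t = 0)
    (hh : ∀ x ∈ ball (0 : V2) l, x ≠ 0 → ContDiffAt ℝ 1 h x) :
    Integrable (JJ (fun x => k (‖x‖ ^ 2) * h x) (fun x => ‖x‖ ^ 2 / 2)) ∧
    ∫ x in ball (0 : V2) l, JJ (fun x => k (‖x‖ ^ 2) * h x) (fun x => ‖x‖ ^ 2 / 2) x = 0 := by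
  apply null_int hR0 hR
  · intro x hx
    apply ContDiffAt.contDiffWithinAt
    by_cases h0 : x = 0
    · subst h0
      apply (contDiffAt_const (c := (0 : ℝ))).congr_of_eventuallyEq
      have : ∀ᶠ y : V2 in 𝓝 0, ‖y‖ ^ 2 < ε := by
        have hc : Continuous fun y : V2 => ‖y‖ ^ 2 := by fun_prop
        exact hc.continuousAt.eventually_lt_const (by simpa using hε)
      filter_upwards [this] with y hy
      rw [hk0 _ hy, zero_mul]
    · have hp : 0 < ‖x‖ ^ 2 := by positivity
      exact ((hk _ hp).comp x (contDiffAt_normSq x)).mul (hh x hx h0)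
  · intro x hx
    rw [hk1 _ (by gcongr), zero_mul]
  · intro x _
    exact ((contDiffAt_normSq x).div_const 2).contDiffWithinAt

lemma JJ_radial {k : ℝ → ℝ} {h : V2 → ℝ} {x : V2}
    (hk : DifferentiableAt ℝ k (‖x‖ ^ 2)) (hh : DifferentiableAt ℝ h x) :
    JJ (fun x => k (‖x‖ ^ 2) * h x) (fun x => ‖x‖ ^ 2 / 2) x =
      k (‖x‖ ^ 2) * (fderiv ℝ h x (EuclideanSpace.single 0 1) * x 1 -
        fderiv ℝ h x (EuclideanSpace.single 1 1) * x 0) := by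
  have h1 : HasFDerivAt (fun y : V2 => k (‖y‖ ^ 2))
      (deriv k (‖x‖ ^ 2) • ((2 : ℝ) • innerSL ℝ x)) x :=
    hk.hasDerivAt.comp_hasFDerivAt x (hasFDerivAt_normSq x)
  have h2 := hmul' h1 hh.hasFDerivAt
  have h3 := (hasFDerivAt_normSq x).mul_const (1 / 2 : ℝ)
  have e : (fun x : V2 => ‖x‖ ^ 2 / 2) = fun x : V2 => ‖x‖ ^ 2 * (1 / 2) := by
    ext y; ring
  rw [JJ, e, h2.fderiv, h3.fderiv]
  simp [PiLp.inner_apply, Fin.sum_univ_two]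
  ring

lemma null_h1_fderiv {Z0 Z1 : V2 → ℝ} {x : V2} {M0 M1 : V2 →L[ℝ] ℝ} (lam : ℝ)
    (h0 : HasFDerivAt Z0 M0 x) (h1 : HasFDerivAt Z1 M1 x) (y : V2) :
    fderiv ℝ (fun x : V2 => x 1 * (pp 2 (1 - (Z0 x ^ 2 + Z1 x ^ 2) / lam ^ 2) * Z0 x) -
      x 0 * (pp 2 (1 - (Z0 x ^ 2 + Z1 x ^ 2) / lam ^ 2) * Z1 x)) x y =
    y 1 * (pp 2 (1 - (Z0 x ^ 2 + Z1 x ^ 2) / lam ^ 2) * Z0 x)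
    - y 0 * (pp 2 (1 - (Z0 x ^ 2 + Z1 x ^ 2) / lam ^ 2) * Z1 x)
    + x 1 * (pp 2 (1 - (Z0 x ^ 2 + Z1 x ^ 2) / lam ^ 2) * M0 y -
      4 * pp 1 (1 - (Z0 x ^ 2 + Z1 x ^ 2) / lam ^ 2) / lam ^ 2 *
        (Z0 x * M0 y + Z1 x * M1 y) * Z0 x)
    - x 0 * (pp 2 (1 - (Z0 x ^ 2 + Z1 x ^ 2) / lam ^ 2) * M1 y -
      4 * pp 1 (1 - (Z0 x ^ 2 + Z1 x ^ 2) / lam ^ 2) / lam ^ 2 *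
        (Z0 x * M0 y + Z1 x * M1 y) * Z1 x) := by
  have hs := ((hadd' (h0.pow 2) (h1.pow 2)).mul_const (1 / lam ^ 2)).const_sub 1
  have hs' : HasFDerivAt (fun x : V2 => 1 - (Z0 x ^ 2 + Z1 x ^ 2) / lam ^ 2) _ x :=
    hs.congr_of_eventuallyEq (Eventually.of_forall fun y => by simp; ring)
  have hp : HasFDerivAt (fun x : V2 => pp 2 (1 - (Z0 x ^ 2 + Z1 x ^ 2) / lam ^ 2)) _ x :=
    hcomp' (k := pp 2) (pp_hasDerivAt 0 (1 - (Z0 x ^ 2 + Z1 x ^ 2) / lam ^ 2)) hs'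
  have ht := hsub' (hmul' (coord_hasFDerivAt 1 x) (hmul' hp h0)) (hmul' (coord_hasFDerivAt 0 x) (hmul' hp h1))
  rw [HasFDerivAt.fderiv ht]
  simp
  ring

lemma null_h3_fderiv {V0 V1 : V2 → ℝ} {x : V2} {M0 M1 : V2 →L[ℝ] ℝ}
    (h0 : HasFDerivAt V0 M0 x) (h1 : HasFDerivAt V1 M1 x) (y : V2) :
    fderiv ℝ (fun x : V2 => x 1 * V0 x - x 0 * V1 x) x y =
    y 1 * V0 x - y 0 * V1 x + x 1 * M0 y - x 0 * M1 y := by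
  have ht := hsub' (hmul' (coord_hasFDerivAt 1 x) h0) (hmul' (coord_hasFDerivAt 0 x) h1)
  rw [HasFDerivAt.fderiv ht]
  simp
  ring

lemma null_h2_eval {V0 V1 : V2 → ℝ} {x : V2} {M0 M1 : V2 →L[ℝ] ℝ} {a : ℝ → ℝ} {a' : ℝ}
    (h0 : HasFDerivAt V0 M0 x) (h1 : HasFDerivAt V1 M1 x)
    (ha : HasDerivAt a a' (V0 x ^ 2 + V1 x ^ 2)) :
    JJ (fun x => Ph (‖x‖ ^ 2) * (a (V0 x ^ 2 + V1 x ^ 2) * V0 x)) V1 x -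
    JJ (fun x => Ph (‖x‖ ^ 2) * (a (V0 x ^ 2 + V1 x ^ 2) * V1 x)) V0 x =
    Ph (‖x‖ ^ 2) * (2 * a (V0 x ^ 2 + V1 x ^ 2) + 2 * ((V0 x ^ 2 + V1 x ^ 2) * a')) *
      (M0 (EuclideanSpace.single 0 1) * M1 (EuclideanSpace.single 1 1) -
        M0 (EuclideanSpace.single 1 1) * M1 (EuclideanSpace.single 0 1)) -
    2 * mm (‖x‖ ^ 2) * (a (V0 x ^ 2 + V1 x ^ 2) *
      (V0 x * (-x 1 * M1 (EuclideanSpace.single 0 1) + x 0 * M1 (EuclideanSpace.single 1 1)) -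
       V1 x * (-x 1 * M0 (EuclideanSpace.single 0 1) + x 0 * M0 (EuclideanSpace.single 1 1)))) := by
  have hp : HasFDerivAt (fun y : V2 => Ph (‖y‖ ^ 2)) _ x :=
    hcomp' (k := Ph) (Ph_hasDerivAt (‖x‖ ^ 2)) (hasFDerivAt_normSq x)
  have hA : HasFDerivAt (fun y : V2 => a (V0 y ^ 2 + V1 y ^ 2)) _ x :=
    hcomp' (k := a) ha (hadd' (h0.pow 2) (h1.pow 2))
  rw [JJ, JJ, h0.fderiv, h1.fderiv, HasFDerivAt.fderiv (hmul' hp (hmul' hA h0)),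
    HasFDerivAt.fderiv (hmul' hp (hmul' hA h1))]
  simp [PiLp.inner_apply, Fin.sum_univ_two]
  ring


/-! ### The calibration -/

/-- Cut-off near the origin and near the boundary of the ball. -/
def chi (n l t : ℝ) : ℝ :=
  Real.smoothTransition (n * t - 1) * Real.smoothTransition (n * (l ^ 2 - t) - 1)

lemma chi_nonneg (n l t : ℝ) : 0 ≤ chi n l t :=
  mul_nonneg (Real.smoothTransition.nonneg _) (Real.smoothTransition.nonneg _)

lemma chi_le_one (n l t : ℝ) : chi n l t ≤ 1 :=
  mul_le_one₀ (Real.smoothTransition.le_one _) (Real.smoothTransition.nonneg _)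
    (Real.smoothTransition.le_one _)

lemma chi_contDiff (n l : ℝ) : ContDiff ℝ 1 (chi n l) := by
  have h := Real.smoothTransition.contDiff (n := 1)
  unfold chi
  have h1 : ContDiff ℝ 1 fun t : ℝ => n * t - 1 := by fun_prop
  have h2 : ContDiff ℝ 1 fun t : ℝ => n * (l ^ 2 - t) - 1 := by fun_prop
  exact (h.comp h1).mul (h.comp h2)

lemma chi_small {n l t : ℝ} (h : n * t ≤ 1) : chi n l t = 0 := by
  rw [chi, Real.smoothTransition.zero_of_nonpos (by linarith), zero_mul]

lemma chi_big {n l t : ℝ} (h : n * (l ^ 2 - t) ≤ 1) : chi n l t = 0 := by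
  rw [chi, Real.smoothTransition.zero_of_nonpos (x := n * (l ^ 2 - t) - 1) (by linarith), mul_zero]

/-- Radial weight of the first null Lagrangian. -/
def k1 (n l t : ℝ) : ℝ := chi n l t / (√(1 + t) * t)

/-- Radial weight of the third null Lagrangian. -/
def k3 (t : ℝ) : ℝ := 2 * mm t / √t

lemma k1_contDiffAt (n l : ℝ) {t : ℝ} (ht : 0 < t) : ContDiffAt ℝ 1 (k1 n l) t := by
  unfold k1
  have h1 : ContDiffAt ℝ 1 (fun t : ℝ => √(1 + t)) t :=
    (contDiffAt_const.add contDiffAt_id).sqrt (by simp; linarith)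
  apply (chi_contDiff n l).contDiffAt.div (h1.mul contDiffAt_id)
  have : 0 < √(1 + t) := Real.sqrt_pos.2 (by linarith)
  simp only [id]
  positivity

lemma k3_contDiffAt {t : ℝ} (ht : 0 < t) : ContDiffAt ℝ 1 k3 t := by
  unfold k3
  have h1 : ContDiffAt ℝ 1 (fun t : ℝ => √t) t := contDiffAt_id.sqrt (by simp; linarith)
  apply (contDiffAt_const.mul mm_contDiff.contDiffAt).div h1
  have : 0 < √t := Real.sqrt_pos.2 (by linarith)
  positivity

lemma proj_ap (i : Fin 2) (y : V2) : (EuclideanSpace.proj i : V2 →L[ℝ] ℝ) y = y i := rfl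

lemma coord_contDiffAt {v : V2 → V2} {x : V2} (hv : ContDiffAt ℝ 1 v x) (i : Fin 2) :
    ContDiffAt ℝ 1 (fun x => v x i) x :=
  (EuclideanSpace.proj i : V2 →L[ℝ] ℝ).contDiff.contDiffAt.comp x hv

lemma coord_hasFDerivAt' {v : V2 → V2} {x : V2} (hv : ContDiffAt ℝ 1 v x) (i : Fin 2) :
    HasFDerivAt (fun x => v x i) ((EuclideanSpace.proj i : V2 →L[ℝ] ℝ).comp (fderiv ℝ v x)) x :=
  (EuclideanSpace.proj i : V2 →L[ℝ] ℝ).hasFDerivAt.comp x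
    (hv.differentiableAt (by norm_num)).hasFDerivAt

lemma vortex_contDiffAt {x : V2} (hx : x ≠ 0) : ContDiffAt ℝ 1 vortex x := by
  unfold vortex
  exact ((contDiffAt_norm ℝ hx).inv (by simpa using hx)).smul contDiffAt_id

lemma vortex_apply (x : V2) (i : Fin 2) : vortex x i = x i / ‖x‖ := by
  simp [vortex]; ring

lemma vortex_P0 {x : V2} (hx : x ≠ 0) :
    fderiv ℝ vortex x (EuclideanSpace.single 0 1) 0 * x 1 -
      fderiv ℝ vortex x (EuclideanSpace.single 1 1) 0 * x 0 = x 1 / ‖x‖ := by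
  have h : 0 < ‖x‖ ^ 2 + 0 := by positivity
  rw [vortex_eq_vv, fderiv_vv_apply h, fderiv_vv_apply h, add_zero, Real.sqrt_sq (norm_nonneg _)]
  simp
  ring

lemma vortex_P1 {x : V2} (hx : x ≠ 0) :
    fderiv ℝ vortex x (EuclideanSpace.single 0 1) 1 * x 1 -
      fderiv ℝ vortex x (EuclideanSpace.single 1 1) 1 * x 0 = -(x 0 / ‖x‖) := by
  have h : 0 < ‖x‖ ^ 2 + 0 := by positivity
  rw [vortex_eq_vv, fderiv_vv_apply h, fderiv_vv_apply h, add_zero, Real.sqrt_sq (norm_nonneg _)]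
  simp
  ring

/-- First null Lagrangian. -/
def n1 (n l lam : ℝ) (v : V2 → V2) : V2 → ℝ :=
  JJ (fun x => k1 n l (‖x‖ ^ 2) *
    (x 1 * (pp 2 (1 - ((v x 0 - vortex x 0) ^ 2 + (v x 1 - vortex x 1) ^ 2) / lam ^ 2) *
        (v x 0 - vortex x 0)) -
      x 0 * (pp 2 (1 - ((v x 0 - vortex x 0) ^ 2 + (v x 1 - vortex x 1) ^ 2) / lam ^ 2) *
        (v x 1 - vortex x 1)))) (fun x => ‖x‖ ^ 2 / 2)

/-- Second null Lagrangian. -/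
def n2 (lam : ℝ) (v : V2 → V2) (x : V2) : ℝ :=
  JJ (fun x => Ph (‖x‖ ^ 2) * (aa lam (v x 0 ^ 2 + v x 1 ^ 2) * v x 0)) (fun x => v x 1) x -
    JJ (fun x => Ph (‖x‖ ^ 2) * (aa lam (v x 0 ^ 2 + v x 1 ^ 2) * v x 1)) (fun x => v x 0) x

/-- Third null Lagrangian. -/
def n3 (v : V2 → V2) : V2 → ℝ :=
  JJ (fun x => k3 (‖x‖ ^ 2) * (x 1 * v x 0 - x 0 * v x 1)) (fun x => ‖x‖ ^ 2 / 2)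

lemma h1_contDiffAt {lam : ℝ} {Z0 Z1 : V2 → ℝ} {x : V2} (h0 : ContDiffAt ℝ 1 Z0 x)
    (h1 : ContDiffAt ℝ 1 Z1 x) :
    ContDiffAt ℝ 1 (fun x : V2 => x 1 * (pp 2 (1 - (Z0 x ^ 2 + Z1 x ^ 2) / lam ^ 2) * Z0 x) -
      x 0 * (pp 2 (1 - (Z0 x ^ 2 + Z1 x ^ 2) / lam ^ 2) * Z1 x)) x := by
  have hp : ContDiffAt ℝ 1 (fun x : V2 => pp 2 (1 - (Z0 x ^ 2 + Z1 x ^ 2) / lam ^ 2)) x := by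
    have h2 : ContDiff ℝ 1 (pp 2) := pp_contDiff 0
    exact h2.contDiffAt.comp x (contDiffAt_const.sub (((h0.pow 2).add (h1.pow 2)).div_const _))
  have c0 := coord_contDiffAt (contDiffAt_id (x := x) (𝕜 := ℝ)) 0
  have c1 := coord_contDiffAt (contDiffAt_id (x := x) (𝕜 := ℝ)) 1
  exact (c1.mul (hp.mul h0)).sub (c0.mul (hp.mul h1))

lemma n1_null {n l lam : ℝ} {v : V2 → V2} (hn : 0 < n) (hl : 0 < l) (hnl : 1 < n * l ^ 2)
    (hv : ContDiffOn ℝ 1 v (ball (0 : V2) l)) :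
    Integrable (n1 n l lam v) ∧ ∫ x in ball (0 : V2) l, n1 n l lam v x = 0 := by
  have hpos : 0 < l ^ 2 - 1 / n := by
    rw [sub_pos, div_lt_iff₀ hn]; linarith
  apply null_radial (R := √(l ^ 2 - 1 / n)) (ε := 1 / n) (Real.sqrt_pos.2 hpos)
  · rw [Real.sqrt_lt' hl]
    have : 0 < 1 / n := by positivity
    linarith
  · positivity
  · exact fun t ht => k1_contDiffAt n l ht
  · intro t ht
    rw [lt_div_iff₀ hn] at ht
    rw [k1, chi_small (by linarith), zero_div]
  · intro t ht
    rw [Real.sq_sqrt hpos.le] at ht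
    have : l ^ 2 - t < 1 / n := by linarith
    rw [lt_div_iff₀ hn] at this
    rw [k1, chi_big (by linarith), zero_div]
  · intro x hx h0
    have hvx := hv.contDiffAt (isOpen_ball.mem_nhds hx)
    have hu := vortex_contDiffAt h0
    exact h1_contDiffAt ((coord_contDiffAt hvx 0).sub (coord_contDiffAt hu 0))
      ((coord_contDiffAt hvx 1).sub (coord_contDiffAt hu 1))

lemma n3_null {l : ℝ} {v : V2 → V2} (hl : 19 ≤ l)
    (hv : ContDiffOn ℝ 1 v (ball (0 : V2) l)) :
    Integrable (n3 v) ∧ ∫ x in ball (0 : V2) l, n3 v x = 0 := by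
  apply null_radial (R := √326) (ε := 1) (by positivity)
  · rw [Real.sqrt_lt' (by linarith)]
    nlinarith
  · positivity
  · exact fun t ht => k3_contDiffAt ht
  · intro t ht
    rw [k3, mm_small ht.le]; simp
  · intro t ht
    rw [Real.sq_sqrt (by norm_num)] at ht
    rw [k3, mm_big ht.le]; simp
  · intro x hx h0
    have hvx := hv.contDiffAt (isOpen_ball.mem_nhds hx)
    have c0 := coord_contDiffAt (contDiffAt_id (x := x) (𝕜 := ℝ)) 0
    have c1 := coord_contDiffAt (contDiffAt_id (x := x) (𝕜 := ℝ)) 1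
    exact (c1.mul (coord_contDiffAt hvx 0)).sub (c0.mul (coord_contDiffAt hvx 1))

lemma n2_null {l lam : ℝ} {v : V2 → V2} (hl : 19 ≤ l) (hlam : 0 < lam) (hlam4 : lam ≤ 1 / 4)
    (hv : ContDiffOn ℝ 1 v (ball (0 : V2) l)) :
    Integrable (n2 lam v) ∧ ∫ x in ball (0 : V2) l, n2 lam v x = 0 := by
  have key : ∀ i j : Fin 2,
      Integrable (JJ (fun x => Ph (‖x‖ ^ 2) * (aa lam (v x 0 ^ 2 + v x 1 ^ 2) * v x i))
        (fun x => v x j)) ∧ ∫ x in ball (0 : V2) l,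
        JJ (fun x => Ph (‖x‖ ^ 2) * (aa lam (v x 0 ^ 2 + v x 1 ^ 2) * v x i))
        (fun x => v x j) x = 0 := by
    intro i j
    apply null_int (R := √326) (by positivity)
    · rw [Real.sqrt_lt' (by linarith)]
      nlinarith
    · intro x hx
      have hvx := hv.contDiffAt (isOpen_ball.mem_nhds hx)
      apply ContDiffAt.contDiffWithinAt
      have hP : ContDiffAt ℝ 1 (fun x : V2 => Ph (‖x‖ ^ 2)) x :=
        Ph_contDiff.contDiffAt.comp x (contDiffAt_normSq x)
      have hA : ContDiffAt ℝ 1 (fun x : V2 => aa lam (v x 0 ^ 2 + v x 1 ^ 2)) x :=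
        (aa_contDiff hlam hlam4).contDiffAt.comp x
          (((coord_contDiffAt hvx 0).pow 2).add ((coord_contDiffAt hvx 1).pow 2))
      exact hP.mul (hA.mul (coord_contDiffAt hvx i))
    · intro x hx
      rw [Real.sqrt_lt (by norm_num) (norm_nonneg _)] at hx
      rw [Ph_big hx.le, zero_mul]
    · intro x hx
      exact (coord_contDiffAt (hv.contDiffAt (isOpen_ball.mem_nhds hx)) j).contDiffWithinAt
  refine ⟨(key 0 1).1.sub (key 1 0).1, ?_⟩
  unfold n2
  rw [integral_sub (key 0 1).1.integrableOn (key 1 0).1.integrableOn, (key 0 1).2, (key 1 0).2,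
    sub_zero]

lemma n1_alg {k r c s Q D Z0 Z1 m00 m01 m10 m11 w1 w2 : ℝ}
    (h0 : m00 * (r * s) - m01 * (r * c) = -(r * w1 + s))
    (h1 : m10 * (r * s) - m11 * (r * c) = -(r * w2 - c)) :
    k * ((0 * (Q * Z0) - 1 * (Q * Z1) + r * s * (Q * m00 - D * (Z0 * m00 + Z1 * m10) * Z0) -
        r * c * (Q * m10 - D * (Z0 * m00 + Z1 * m10) * Z1)) * (r * s) -
      (1 * (Q * Z0) - 0 * (Q * Z1) + r * s * (Q * m01 - D * (Z0 * m01 + Z1 * m11) * Z0) -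
        r * c * (Q * m11 - D * (Z0 * m01 + Z1 * m11) * Z1)) * (r * c)) =
    (k * r) * (-(c * (Q * Z0) + s * (Q * Z1)) + ((Q * (-s) - D * (-s * Z0 + c * Z1) * Z0) *
      (r * w1 + s) + (Q * c - D * (-s * Z0 + c * Z1) * Z1) * (r * w2 - c))) := by
  linear_combination k * (r * s * Q - r * s * D * Z0 ^ 2 + r * c * D * Z0 * Z1) * h0 +
    k * (-(r * c) * Q - r * s * D * Z1 * Z0 + r * c * D * Z1 ^ 2) * h1

lemma n1_eval {n l lam : ℝ} {v : V2 → V2} {x : V2} (hvx : ContDiffAt ℝ 1 v x) (hx : x ≠ 0)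
    {c s p11 p12 p21 p22 q d : ℝ} (hc : c = x 0 / ‖x‖) (hs : s = x 1 / ‖x‖)
    (h11 : p11 = fderiv ℝ v x (EuclideanSpace.single 0 1) 0)
    (h12 : p12 = fderiv ℝ v x (EuclideanSpace.single 1 1) 0)
    (h21 : p21 = fderiv ℝ v x (EuclideanSpace.single 0 1) 1)
    (h22 : p22 = fderiv ℝ v x (EuclideanSpace.single 1 1) 1)
    (hq : q = max 0 (1 - ((v x 0 - c) ^ 2 + (v x 1 - s) ^ 2) / lam ^ 2))
    (hd : d = 4 * q / lam ^ 2) :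
    n1 n l lam v x = (chi n l (‖x‖ ^ 2) / √(1 + ‖x‖ ^ 2) / ‖x‖) *
      (-(c * (q ^ 2 * (v x 0 - c)) + s * (q ^ 2 * (v x 1 - s))) +
      ((q ^ 2 * (-s) - d * (-s * (v x 0 - c) + c * (v x 1 - s)) * (v x 0 - c)) *
          (‖x‖ * (-s * p11 + c * p12) + s) +
        (q ^ 2 * c - d * (-s * (v x 0 - c) + c * (v x 1 - s)) * (v x 1 - s)) *
          (‖x‖ * (-s * p21 + c * p22) - c))) := by
  have hr : 0 < ‖x‖ := norm_pos_iff.2 hx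
  have hu := vortex_contDiffAt hx
  have hZ0 := hsub' (coord_hasFDerivAt' hvx 0) (coord_hasFDerivAt' hu 0)
  have hZ1 := hsub' (coord_hasFDerivAt' hvx 1) (coord_hasFDerivAt' hu 1)
  have hh := h1_contDiffAt (lam := lam) ((coord_contDiffAt hvx 0).sub (coord_contDiffAt hu 0))
      ((coord_contDiffAt hvx 1).sub (coord_contDiffAt hu 1))
  have hk := (k1_contDiffAt n l (t := ‖x‖ ^ 2) (by positivity)).differentiableAt (by norm_num)
  have e := JJ_radial hk (hh.differentiableAt (by norm_num))
  have e0 := null_h1_fderiv lam hZ0 hZ1 (EuclideanSpace.single 0 1)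
  have e1 := null_h1_fderiv lam hZ0 hZ1 (EuclideanSpace.single 1 1)
  have P0 := vortex_P0 hx
  have P1 := vortex_P1 hx
  have hx0 : x 0 = ‖x‖ * c := by rw [hc]; field_simp
  have hx1 : x 1 = ‖x‖ * s := by rw [hs]; field_simp
  have hu0 : vortex x 0 = c := by rw [vortex_apply, hc]
  have hu1 : vortex x 1 = s := by rw [vortex_apply, hs]
  simp only [sub_apply, ContinuousLinearMap.comp_apply, proj_ap,
    hu0, hu1] at e0 e1
  have hpp2 : pp 2 (1 - ((v x 0 - c) ^ 2 + (v x 1 - s) ^ 2) / lam ^ 2) = q ^ 2 := by rw [pp, hq]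
  have hpp1 : pp 1 (1 - ((v x 0 - c) ^ 2 + (v x 1 - s) ^ 2) / lam ^ 2) = q := by
    rw [pp, hq, pow_one]
  rw [hpp2, hpp1, ← hd] at e0 e1
  have s00 : (EuclideanSpace.single (0 : Fin 2) (1 : ℝ) : V2) 0 = 1 := by simp
  have s01 : (EuclideanSpace.single (0 : Fin 2) (1 : ℝ) : V2) 1 = 0 := by simp
  have s10 : (EuclideanSpace.single (1 : Fin 2) (1 : ℝ) : V2) 0 = 0 := by simp
  have s11 : (EuclideanSpace.single (1 : Fin 2) (1 : ℝ) : V2) 1 = 1 := by simp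
  rw [s00, s01] at e0
  rw [s10, s11] at e1
  rw [← h11, ← h21] at e0
  rw [← h12, ← h22] at e1
  have hk1 : k1 n l (‖x‖ ^ 2) * ‖x‖ = chi n l (‖x‖ ^ 2) / √(1 + ‖x‖ ^ 2) / ‖x‖ := by
    have : 0 < √(1 + ‖x‖ ^ 2) := Real.sqrt_pos.2 (by positivity)
    rw [k1]; field_simp
  refine Eq.trans e ?_
  rw [← hk1]
  refine Eq.trans (congrArg₂ (fun a b => k1 n l (‖x‖ ^ 2) * (a * x 1 - b * x 0)) e0 e1) ?_
  simp only []
  rw [hx0, hx1] at P0 P1 ⊢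
  apply n1_alg
  · have : ‖x‖ * s / ‖x‖ = s := by field_simp
    rw [this] at P0
    linear_combination -P0
  · have : ‖x‖ * c / ‖x‖ = c := by field_simp
    rw [this] at P1
    linear_combination -P1

lemma n2_eval {lam : ℝ} {v : V2 → V2} {x : V2} (hlam : 0 < lam) (hlam4 : lam ≤ 1 / 4)
    (hvx : ContDiffAt ℝ 1 v x) (hx : x ≠ 0)
    {c s p11 p12 p21 p22 : ℝ} (hc : c = x 0 / ‖x‖) (hs : s = x 1 / ‖x‖)
    (h11 : p11 = fderiv ℝ v x (EuclideanSpace.single 0 1) 0)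
    (h12 : p12 = fderiv ℝ v x (EuclideanSpace.single 1 1) 0)
    (h21 : p21 = fderiv ℝ v x (EuclideanSpace.single 0 1) 1)
    (h22 : p22 = fderiv ℝ v x (EuclideanSpace.single 1 1) 1) :
    n2 lam v x = Ph (‖x‖ ^ 2) * (1 - kd lam (v x 0 ^ 2 + v x 1 ^ 2)) * (p11 * p22 - p12 * p21)
      - (2 * ‖x‖ * mm (‖x‖ ^ 2)) * (aa lam (v x 0 ^ 2 + v x 1 ^ 2) *
        (v x 0 * (-s * p21 + c * p22) - v x 1 * (-s * p11 + c * p12))) := by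
  have hr : 0 < ‖x‖ := norm_pos_iff.2 hx
  obtain ⟨a', ha, hcurl⟩ := aa_hasDerivAt hlam hlam4 (v x 0 ^ 2 + v x 1 ^ 2)
  have e := null_h2_eval (coord_hasFDerivAt' hvx 0) (coord_hasFDerivAt' hvx 1) ha
  simp only [ContinuousLinearMap.comp_apply, proj_ap] at e
  rw [← h11, ← h12, ← h21, ← h22, hcurl] at e
  have hx0 : x 0 = ‖x‖ * c := by rw [hc]; field_simp
  have hx1 : x 1 = ‖x‖ * s := by rw [hs]; field_simp
  refine Eq.trans e ?_
  rw [hx0, hx1]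
  ring

lemma n3_eval {v : V2 → V2} {x : V2} (hvx : ContDiffAt ℝ 1 v x) (hx : x ≠ 0)
    {c s p11 p12 p21 p22 : ℝ} (hc : c = x 0 / ‖x‖) (hs : s = x 1 / ‖x‖)
    (h11 : p11 = fderiv ℝ v x (EuclideanSpace.single 0 1) 0)
    (h12 : p12 = fderiv ℝ v x (EuclideanSpace.single 1 1) 0)
    (h21 : p21 = fderiv ℝ v x (EuclideanSpace.single 0 1) 1)
    (h22 : p22 = fderiv ℝ v x (EuclideanSpace.single 1 1) 1) :
    n3 v x = (2 * ‖x‖ * mm (‖x‖ ^ 2)) * (-(c * v x 0 + s * v x 1) / ‖x‖ +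
        (-s * (-s * p11 + c * p12) + c * (-s * p21 + c * p22))) := by
  have hr : 0 < ‖x‖ := norm_pos_iff.2 hx
  have c0 := coord_contDiffAt (contDiffAt_id (x := x) (𝕜 := ℝ)) 0
  have c1 := coord_contDiffAt (contDiffAt_id (x := x) (𝕜 := ℝ)) 1
  have hh : ContDiffAt ℝ 1 (fun x : V2 => x 1 * v x 0 - x 0 * v x 1) x :=
    (c1.mul (coord_contDiffAt hvx 0)).sub (c0.mul (coord_contDiffAt hvx 1))
  have hk := (k3_contDiffAt (t := ‖x‖ ^ 2) (by positivity)).differentiableAt (by norm_num)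
  have e := JJ_radial hk (hh.differentiableAt (by norm_num))
  have e0 := null_h3_fderiv (coord_hasFDerivAt' hvx 0) (coord_hasFDerivAt' hvx 1)
    (EuclideanSpace.single 0 1)
  have e1 := null_h3_fderiv (coord_hasFDerivAt' hvx 0) (coord_hasFDerivAt' hvx 1)
    (EuclideanSpace.single 1 1)
  simp only [ContinuousLinearMap.comp_apply, proj_ap] at e0 e1
  rw [← h11, ← h21] at e0
  rw [← h12, ← h22] at e1
  have hx0 : x 0 = ‖x‖ * c := by rw [hc]; field_simp
  have hx1 : x 1 = ‖x‖ * s := by rw [hs]; field_simp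
  have s00 : (EuclideanSpace.single (0 : Fin 2) (1 : ℝ) : V2) 0 = 1 := by simp
  have s01 : (EuclideanSpace.single (0 : Fin 2) (1 : ℝ) : V2) 1 = 0 := by simp
  have s10 : (EuclideanSpace.single (1 : Fin 2) (1 : ℝ) : V2) 0 = 0 := by simp
  have s11 : (EuclideanSpace.single (1 : Fin 2) (1 : ℝ) : V2) 1 = 1 := by simp
  rw [s00, s01] at e0
  rw [s10, s11] at e1
  have hk3 : k3 (‖x‖ ^ 2) = 2 * mm (‖x‖ ^ 2) / ‖x‖ := by
    rw [k3, Real.sqrt_sq hr.le]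
  refine Eq.trans e ?_
  refine Eq.trans (congrArg₂ (fun a b => k3 (‖x‖ ^ 2) * (a * x 1 - b * x 0)) e0 e1) ?_
  simp only []
  rw [hx0, hx1, hk3]
  field_simp
  ring

/-- The main part of the calibration energy. -/
def E1 (n l lam : ℝ) (x : V2) : ℝ :=
  (1 - lam) * (‖x‖ / √(1 + ‖x‖ ^ 2) + chi n l (‖x‖ ^ 2) / √(1 + ‖x‖ ^ 2) / ‖x‖)

/-- Error constant. -/
def CC (n lam : ℝ) : ℝ := 1 / lam + n * (1 + 6 / lam) + 1

lemma chi_div_le {n l r : ℝ} (hn : 1 ≤ n) (hr : 0 < r) :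
    chi n l (r ^ 2) / √(1 + r ^ 2) / r ≤ n := by
  rw [div_le_iff₀ hr]
  by_cases h : n * r ^ 2 ≤ 1
  · rw [chi_small h, zero_div]; positivity
  · push Not at h
    have h1 : 1 ≤ √(1 + r ^ 2) := Real.one_le_sqrt.2 (by nlinarith)
    have h2 : chi n l (r ^ 2) / √(1 + r ^ 2) ≤ 1 :=
      (div_le_one (by linarith)).2 ((chi_le_one _ _ _).trans h1)
    have h3 : 1 ≤ n * r := by
      by_contra hc
      push Not at hc
      have h4 : 0 < n * r := by positivity
      have h5 : (n * r) ^ 2 < 1 := by nlinarith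
      nlinarith
    linarith

lemma calib_pointwise {n l lam : ℝ} {v : V2 → V2} {x : V2} (hn : 1 ≤ n)
    (hlam : 0 < lam) (hlam4 : lam ≤ 1 / 4)
    (hvx : ContDiffAt ℝ 1 v x) (hx : x ≠ 0) :
    E1 n l lam x + (1 / 2 - 5 * lam / 4) * (2 * mm (‖x‖ ^ 2)) +
      ((1 - lam) * n1 n l lam v x + n2 lam v x + (1 / 2 - 5 * lam / 4) * n3 v x) ≤
    areaIntegrand v x + CC n lam * ‖v x - vortex x‖ := by
  have hr : 0 < ‖x‖ := norm_pos_iff.2 hx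
  have hz : ‖v x - vortex x‖ ^ 2 = (v x 0 - x 0 / ‖x‖) ^ 2 + (v x 1 - x 1 / ‖x‖) ^ 2 := by
    rw [normSq_eq]
    simp only [PiLp.sub_apply, vortex_apply]
  rw [n1_eval hvx hx rfl rfl rfl rfl rfl rfl rfl rfl, n2_eval hlam hlam4 hvx hx rfl rfl rfl rfl rfl rfl,
    n3_eval hvx hx rfl rfl rfl rfl rfl rfl]
  have hsq : 0 < √(1 + ‖x‖ ^ 2) := Real.sqrt_pos.2 (by positivity)
  have hsq2 : √(1 + ‖x‖ ^ 2) ^ 2 = 1 + ‖x‖ ^ 2 := Real.sq_sqrt (by positivity)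
  have hmm := mm_nonneg (‖x‖ ^ 2)
  have hψ : 2 * ‖x‖ * mm (‖x‖ ^ 2) / ‖x‖ = 2 * mm (‖x‖ ^ 2) := by field_simp
  have hcs : (x 0 / ‖x‖) ^ 2 + (x 1 / ‖x‖) ^ 2 = 1 := by
    rw [div_pow, div_pow, ← add_div, ← normSq_eq]
    exact div_self (by positivity)
  have hkd := kd_bounds hlam (v x 0 ^ 2 + v x 1 ^ 2)
  have hAB : (‖x‖ / √(1 + ‖x‖ ^ 2)) ^ 2 + (chi n l (‖x‖ ^ 2) / √(1 + ‖x‖ ^ 2)) ^ 2 ≤ 1 := by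
    rw [div_pow, div_pow, hsq2, ← add_div, div_le_one (by positivity)]
    have := pow_le_one₀ (chi_nonneg n l (‖x‖ ^ 2)) (chi_le_one n l (‖x‖ ^ 2)) (n := 2)
    linarith
  have key := pointwise (c := x 0 / ‖x‖) (s := x 1 / ‖x‖) (r := ‖x‖) (v1 := v x 0) (v2 := v x 1)
    (p11 := fderiv ℝ v x (EuclideanSpace.single 0 1) 0)
    (p12 := fderiv ℝ v x (EuclideanSpace.single 1 1) 0)
    (p21 := fderiv ℝ v x (EuclideanSpace.single 0 1) 1)
    (p22 := fderiv ℝ v x (EuclideanSpace.single 1 1) 1)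
    (φ := Ph (‖x‖ ^ 2)) (ψ := 2 * ‖x‖ * mm (‖x‖ ^ 2)) (a := aa lam (v x 0 ^ 2 + v x 1 ^ 2))
    (curl := 1 - kd lam (v x 0 ^ 2 + v x 1 ^ 2)) (M := 1 / 2 - 5 * lam / 4)
    (zn := ‖v x - vortex x‖) (B := n)
    hcs hr hlam hlam4 (by positivity) (div_nonneg (chi_nonneg _ _ _) hsq.le) hAB
    (Ph_nonneg _) (by positivity) Ph_mm (by linarith [hkd.2]) (by linarith [hkd.1])
    (fun h => aa_big hlam hlam4 h) (aa_sq hlam hlam4 (by positivity)) (by linarith) (by linarith)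
    (norm_nonneg _) hz rfl rfl (by rw [hψ]; exact two_mm_le _) (chi_div_le hn hr)
  rw [hψ, hz] at key
  have hfrob : areaIntegrand v x = Real.sqrt (1 +
      ((fderiv ℝ v x (EuclideanSpace.single 0 1) 0) ^ 2 +
        (fderiv ℝ v x (EuclideanSpace.single 1 1) 0) ^ 2 +
      ((fderiv ℝ v x (EuclideanSpace.single 0 1) 1) ^ 2 +
        (fderiv ℝ v x (EuclideanSpace.single 1 1) 1) ^ 2)) +
      (fderiv ℝ v x (EuclideanSpace.single 0 1) 0 * fderiv ℝ v x (EuclideanSpace.single 1 1) 1 -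
        fderiv ℝ v x (EuclideanSpace.single 1 1) 0 * fderiv ℝ v x (EuclideanSpace.single 0 1) 1) ^ 2) := by
    simp only [areaIntegrand, frobSq, detJ, Fin.sum_univ_two]
  rw [hfrob]
  exact key


/-! ### Integration and passage to the limit -/

lemma mm_lintegral {l : ℝ} (hl : 19 ≤ l) :
    ∫⁻ x in ball (0 : V2) l, ENNReal.ofReal (mm (‖x‖ ^ 2)) = ENNReal.ofReal Real.pi := by
  have hF : ∀ y ∈ Set.Ici (0 : ℝ), HasDerivAt (fun y => -Ph (y ^ 2) / 2) (y * mm (y ^ 2)) y := by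
    intro y _
    have h1 : HasDerivAt (fun y : ℝ => y ^ 2) (2 * y) y := by simpa using hasDerivAt_pow 2 y
    have h2 : HasDerivAt (fun y : ℝ => Ph (y ^ 2)) (-mm (y ^ 2) * (2 * y)) y :=
      HasDerivAt.comp (h₂ := Ph) y (Ph_hasDerivAt (y ^ 2)) h1
    exact (h2.neg.div_const 2).congr_deriv (by ring)
  have hL : Tendsto (fun y : ℝ => -Ph (y ^ 2) / 2) atTop (𝓝 0) := by
    apply tendsto_const_nhds.congr'
    filter_upwards [eventually_ge_atTop 19] with y hy
    rw [Ph_big (by nlinarith)]; simp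
  obtain ⟨h1, h2⟩ := radial_integral (f := fun y => mm (y ^ 2)) hF
    (fun y hy => mul_nonneg (le_of_lt hy) (mm_nonneg _)) hL
  rw [← ofReal_integral_eq_lintegral_ofReal h1.integrableOn
    (Eventually.of_forall fun x => mm_nonneg _)]
  rw [setIntegral_eq_integral_of_forall_compl_eq_zero, h2]
  · have : Ph ((0 : ℝ) ^ 2) = 1 := Ph_small (by norm_num)
    rw [this]; congr 1; ring
  · intro x hx
    have : l ≤ ‖x‖ := by simpa using hx
    exact mm_big (by nlinarith)

lemma E1_measurable (n l lam : ℝ) : Measurable (E1 n l lam) := by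
  have := (chi_contDiff n l).continuous.measurable
  unfold E1
  fun_prop

lemma E1_bound {n l lam : ℝ} (hn : 1 ≤ n) (hlam : 0 < lam) (hlam4 : lam ≤ 1 / 4) (x : V2) :
    0 ≤ E1 n l lam x ∧ E1 n l lam x ≤ 1 + n := by
  have hsq : 0 < √(1 + ‖x‖ ^ 2) := Real.sqrt_pos.2 (by positivity)
  have h1 : ‖x‖ / √(1 + ‖x‖ ^ 2) ≤ 1 := by
    rw [div_le_one hsq]
    apply Real.le_sqrt_of_sq_le; linarith
  have h2 : chi n l (‖x‖ ^ 2) / √(1 + ‖x‖ ^ 2) / ‖x‖ ≤ n := by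
    by_cases hx : x = 0
    · subst hx; simp; linarith
    · exact chi_div_le hn (norm_pos_iff.2 hx)
  have h3 : 0 ≤ ‖x‖ / √(1 + ‖x‖ ^ 2) := by positivity
  have h4 : 0 ≤ chi n l (‖x‖ ^ 2) / √(1 + ‖x‖ ^ 2) / ‖x‖ :=
    div_nonneg (div_nonneg (chi_nonneg _ _ _) hsq.le) (norm_nonneg _)
  unfold E1
  constructor
  · apply mul_nonneg <;> linarith
  · have : 0 ≤ lam * (‖x‖ / √(1 + ‖x‖ ^ 2) + chi n l (‖x‖ ^ 2) / √(1 + ‖x‖ ^ 2) / ‖x‖) := by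
      positivity
    linarith

lemma ofReal_integral_le' {μ : Measure V2} {f : V2 → ℝ} (hf : Integrable f μ) :
    ENNReal.ofReal (∫ x, f x ∂μ) ≤ ∫⁻ x, ENNReal.ofReal (f x) ∂μ := by
  calc ENNReal.ofReal (∫ x, f x ∂μ) ≤ ENNReal.ofReal (∫ x, max (f x) 0 ∂μ) := by
        apply ENNReal.ofReal_le_ofReal
        exact integral_mono hf hf.pos_part fun x => le_max_left _ _
    _ = ∫⁻ x, ENNReal.ofReal (max (f x) 0) ∂μ :=
        ofReal_integral_eq_lintegral_ofReal hf.pos_part (Eventually.of_forall fun x => le_max_right _ _)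
    _ = ∫⁻ x, ENNReal.ofReal (f x) ∂μ := by
        congr 1; ext x
        rcases le_total (f x) 0 with h | h
        · rw [max_eq_right h, ENNReal.ofReal_of_nonpos h]; simp
        · rw [max_eq_left h]

lemma CC_nonneg {n lam : ℝ} (hn : 1 ≤ n) (hlam : 0 < lam) : 0 ≤ CC n lam := by
  unfold CC; positivity

lemma calib {n l lam : ℝ} {v : V2 → V2} (hl : 19 ≤ l) (hn : 1 ≤ n)
    (hlam : 0 < lam) (hlam4 : lam ≤ 1 / 4) (hv : ContDiffOn ℝ 1 v (ball (0 : V2) l)) :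
    ∫⁻ x in ball (0 : V2) l,
      ENNReal.ofReal (E1 n l lam x + (1 / 2 - 5 * lam / 4) * (2 * mm (‖x‖ ^ 2))) ≤
    graphArea v (ball (0 : V2) l) + ENNReal.ofReal (CC n lam) *
      ∫⁻ x in ball (0 : V2) l, ENNReal.ofReal ‖v x - vortex x‖ := by
  obtain ⟨i1, z1⟩ := n1_null (lam := lam) (show 0 < n by linarith) (by linarith) (by nlinarith) hv
  obtain ⟨i2, z2⟩ := n2_null hl hlam hlam4 hv
  obtain ⟨i3, z3⟩ := n3_null hl hv
  set μ := (volume : Measure V2).restrict (ball (0 : V2) l) with hμ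
  set M := 1 / 2 - 5 * lam / 4 with hM
  have hM0 : 0 ≤ M := by rw [hM]; linarith
  set E : V2 → ℝ := fun x => E1 n l lam x + M * (2 * mm (‖x‖ ^ 2)) with hE
  have hE0 : ∀ x, 0 ≤ E x := fun x =>
    add_nonneg (E1_bound hn hlam hlam4 x).1 (mul_nonneg hM0 (mul_nonneg (by norm_num) (mm_nonneg _)))
  have hEm : Measurable E := by
    have h1 := E1_measurable n l lam
    have h2 := mm_contDiff.continuous.measurable
    fun_prop
  have hEi : Integrable E μ := by
    have hfin : IsFiniteMeasure μ := ⟨by rw [hμ, Measure.restrict_apply_univ]; exact measure_ball_lt_top⟩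
    apply Integrable.of_bound hEm.aestronglyMeasurable (1 + n + M)
    filter_upwards with x
    rw [Real.norm_eq_abs, abs_of_nonneg (hE0 x)]
    have h1 := (E1_bound (l := l) hn hlam hlam4 x).2
    have h2 := mul_le_mul_of_nonneg_left (two_mm_le (‖x‖ ^ 2)) hM0
    simp only [hE]
    linarith
  set N : V2 → ℝ := fun x => (1 - lam) * n1 n l lam v x + n2 lam v x + M * n3 v x with hN
  have j1 : Integrable (fun x => (1 - lam) * n1 n l lam v x) μ := i1.integrableOn.const_mul _
  have j2 : Integrable (n2 lam v) μ := i2.integrableOn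
  have j3 : Integrable (fun x => M * n3 v x) μ := i3.integrableOn.const_mul _
  have j12 : Integrable (fun x => (1 - lam) * n1 n l lam v x + n2 lam v x) μ := j1.add j2
  have hNi : Integrable N μ := j12.add j3
  have hNz : ∫ x, N x ∂μ = 0 := by
    simp only [hN]
    rw [integral_add j12 j3, integral_add j1 j2, integral_const_mul, integral_const_mul, z1, z2, z3]
    simp
  have hvm : AEStronglyMeasurable v μ := hv.continuousOn.aestronglyMeasurable measurableSet_ball
  have hum : Measurable vortex := by unfold vortex; fun_prop
  have hzm : AEMeasurable (fun x => ENNReal.ofReal ‖v x - vortex x‖) μ :=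
    ((hvm.sub hum.aestronglyMeasurable).norm.aemeasurable).ennreal_ofReal
  have hae : ∀ᵐ x ∂μ, ENNReal.ofReal (E x + N x) ≤ ENNReal.ofReal (areaIntegrand v x) +
      ENNReal.ofReal (CC n lam) * ENNReal.ofReal ‖v x - vortex x‖ := by
    have h0 : ∀ᵐ x ∂μ, x ≠ 0 := ae_restrict_of_ae (Measure.ae_ne volume 0)
    filter_upwards [h0, ae_restrict_mem measurableSet_ball] with x hx hxb
    have hvx := hv.contDiffAt (isOpen_ball.mem_nhds hxb)
    rw [← ENNReal.ofReal_mul (CC_nonneg hn hlam), ← ENNReal.ofReal_add (show 0 ≤ areaIntegrand v x from Real.sqrt_nonneg _)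
      (mul_nonneg (CC_nonneg hn hlam) (norm_nonneg _))]
    exact ENNReal.ofReal_le_ofReal (calib_pointwise hn hlam hlam4 hvx hx)
  calc ∫⁻ x, ENNReal.ofReal (E x) ∂μ = ENNReal.ofReal (∫ x, E x ∂μ) :=
        (ofReal_integral_eq_lintegral_ofReal hEi (Eventually.of_forall hE0)).symm
    _ = ENNReal.ofReal (∫ x, (E x + N x) ∂μ) := by rw [integral_add hEi hNi, hNz, add_zero]
    _ ≤ ∫⁻ x, ENNReal.ofReal (E x + N x) ∂μ := ofReal_integral_le' (hEi.add hNi)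
    _ ≤ ∫⁻ x, (ENNReal.ofReal (areaIntegrand v x) +
      ENNReal.ofReal (CC n lam) * ENNReal.ofReal ‖v x - vortex x‖) ∂μ := lintegral_mono_ae hae
    _ = _ := by
      rw [lintegral_add_right' _ (hzm.const_mul _), lintegral_const_mul'' _ hzm]
      rfl

lemma E1_tendsto {l : ℝ} {x : V2} (hl : 0 < l) (hxb : x ∈ ball (0 : V2) l) (hx : x ≠ 0) :
    Tendsto (fun m : ℕ => E1 ((m : ℝ) + 1) l (1 / ((m : ℝ) + 4)) x +
      (1 / 2 - 5 * (1 / ((m : ℝ) + 4)) / 4) * (2 * mm (‖x‖ ^ 2))) atTop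
      (𝓝 (Real.sqrt (1 + frobSq (fderiv ℝ vortex x)) + mm (‖x‖ ^ 2))) := by
  have hr : 0 < ‖x‖ := norm_pos_iff.2 hx
  have hrl : ‖x‖ < l := by simpa using hxb
  have hlam : Tendsto (fun m : ℕ => 1 / ((m : ℝ) + 4)) atTop (𝓝 0) := by
    have h1 : Tendsto (fun m : ℕ => (m : ℝ) + 4) atTop atTop :=
      tendsto_atTop_add_const_right _ _ tendsto_natCast_atTop_atTop
    simp only [one_div]
    exact h1.inv_tendsto_atTop
  have hn : Tendsto (fun m : ℕ => (m : ℝ) + 1) atTop atTop :=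
    tendsto_atTop_add_const_right _ _ tendsto_natCast_atTop_atTop
  have hgap : 0 < l ^ 2 - ‖x‖ ^ 2 := by nlinarith
  have ev1 : ∀ᶠ m : ℕ in atTop, 2 ≤ ((m : ℝ) + 1) * ‖x‖ ^ 2 :=
    (hn.atTop_mul_const (show 0 < ‖x‖ ^ 2 by positivity)).eventually_ge_atTop 2
  have ev2 : ∀ᶠ m : ℕ in atTop, 2 ≤ ((m : ℝ) + 1) * (l ^ 2 - ‖x‖ ^ 2) :=
    (hn.atTop_mul_const hgap).eventually_ge_atTop 2
  have hsq : 0 < √(1 + ‖x‖ ^ 2) := Real.sqrt_pos.2 (by positivity)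
  have hsq2 : √(1 + ‖x‖ ^ 2) ^ 2 = 1 + ‖x‖ ^ 2 := Real.sq_sqrt (by positivity)
  have hlim : Real.sqrt (1 + frobSq (fderiv ℝ vortex x)) =
      ‖x‖ / √(1 + ‖x‖ ^ 2) + 1 / √(1 + ‖x‖ ^ 2) / ‖x‖ := by
    rw [frobSq_vortex hx]
    have e1 : 1 + (‖x‖⁻¹) ^ 2 = (√(1 + ‖x‖ ^ 2) / ‖x‖) ^ 2 := by
      rw [div_pow, hsq2]; field_simp; ring
    rw [e1, Real.sqrt_sq (by positivity)]
    field_simp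
    rw [hsq2]; ring
  have hT : Tendsto (fun m : ℕ => (1 - 1 / ((m : ℝ) + 4)) *
      (‖x‖ / √(1 + ‖x‖ ^ 2) + 1 / √(1 + ‖x‖ ^ 2) / ‖x‖) +
      (1 / 2 - 5 * (1 / ((m : ℝ) + 4)) / 4) * (2 * mm (‖x‖ ^ 2))) atTop
      (𝓝 ((1 - 0) * (‖x‖ / √(1 + ‖x‖ ^ 2) + 1 / √(1 + ‖x‖ ^ 2) / ‖x‖) +
      (1 / 2 - 5 * 0 / 4) * (2 * mm (‖x‖ ^ 2)))) :=
    ((tendsto_const_nhds.sub hlam).mul_const _).add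
      ((tendsto_const_nhds.sub ((hlam.const_mul 5).div_const 4)).mul_const _)
  have e : (1 - 0) * (‖x‖ / √(1 + ‖x‖ ^ 2) + 1 / √(1 + ‖x‖ ^ 2) / ‖x‖) +
      (1 / 2 - 5 * 0 / 4) * (2 * mm (‖x‖ ^ 2)) =
      Real.sqrt (1 + frobSq (fderiv ℝ vortex x)) + mm (‖x‖ ^ 2) := by
    rw [hlim]; ring
  rw [e] at hT
  apply hT.congr'
  filter_upwards [ev1, ev2] with m h1 h2
  have hchi : chi ((m : ℝ) + 1) l (‖x‖ ^ 2) = 1 := by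
    rw [chi, Real.smoothTransition.one_of_one_le (by linarith),
      Real.smoothTransition.one_of_one_le (by linarith), one_mul]
  rw [E1, hchi]

lemma lower_bound {l : ℝ} (hl : 19 ≤ l) :
    vortexGradArea l + ENNReal.ofReal Real.pi ≤ relaxedArea l := by
  apply le_sInf
  rintro a ⟨v, hv, hconv, rfl⟩
  have hm : Measurable fun x : V2 => ENNReal.ofReal (mm (‖x‖ ^ 2)) := by
    have h2 := mm_contDiff.continuous.measurable
    fun_prop
  -- the bound for fixed parameters
  have step : ∀ m : ℕ, ∫⁻ x in ball (0 : V2) l,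
      ENNReal.ofReal (E1 ((m : ℝ) + 1) l (1 / ((m : ℝ) + 4)) x +
      (1 / 2 - 5 * (1 / ((m : ℝ) + 4)) / 4) * (2 * mm (‖x‖ ^ 2))) ≤
      Filter.liminf (fun k => graphArea (v k) (ball (0 : V2) l)) atTop := by
    intro m
    have hm0 : (0 : ℝ) ≤ m := Nat.cast_nonneg m
    have hlam4 : 1 / ((m : ℝ) + 4) ≤ 1 / 4 := by gcongr; linarith
    have h0 : Tendsto (fun k => ENNReal.ofReal (CC ((m : ℝ) + 1) (1 / ((m : ℝ) + 4))) *
        ∫⁻ x in ball (0 : V2) l, ENNReal.ofReal ‖v k x - vortex x‖) atTop (𝓝 0) := by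
      have := ENNReal.Tendsto.const_mul (a := ENNReal.ofReal (CC ((m : ℝ) + 1) (1 / ((m : ℝ) + 4))))
        hconv (Or.inr ENNReal.ofReal_ne_top)
      simpa using this
    rw [← ENNReal.liminf_add_of_right_tendsto_zero h0]
    refine le_liminf_of_le (by isBoundedDefault) (Eventually.of_forall fun k => ?_)
    exact calib hl (by linarith) (by positivity) hlam4 (hv k)
  have hmeas : ∀ m : ℕ, Measurable fun x : V2 =>
      ENNReal.ofReal (E1 ((m : ℝ) + 1) l (1 / ((m : ℝ) + 4)) x +
      (1 / 2 - 5 * (1 / ((m : ℝ) + 4)) / 4) * (2 * mm (‖x‖ ^ 2))) := by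
    intro m
    have h1 := E1_measurable ((m : ℝ) + 1) l (1 / ((m : ℝ) + 4))
    have h2 := mm_contDiff.continuous.measurable
    fun_prop
  calc vortexGradArea l + ENNReal.ofReal Real.pi
      = ∫⁻ x in ball (0 : V2) l, (ENNReal.ofReal (Real.sqrt (1 + frobSq (fderiv ℝ vortex x))) +
          ENNReal.ofReal (mm (‖x‖ ^ 2))) := by
        rw [lintegral_add_right _ hm, mm_lintegral hl, vortexGradArea]
    _ = ∫⁻ x in ball (0 : V2) l, Filter.liminf (fun m : ℕ =>
          ENNReal.ofReal (E1 ((m : ℝ) + 1) l (1 / ((m : ℝ) + 4)) x +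
          (1 / 2 - 5 * (1 / ((m : ℝ) + 4)) / 4) * (2 * mm (‖x‖ ^ 2)))) atTop := by
        apply lintegral_congr_ae
        filter_upwards [ae_restrict_of_ae (Measure.ae_ne volume 0),
          ae_restrict_mem measurableSet_ball] with x hx hxb
        rw [← ENNReal.ofReal_add (Real.sqrt_nonneg _) (mm_nonneg _)]
        exact ((ENNReal.tendsto_ofReal (E1_tendsto (by linarith) hxb hx)).liminf_eq).symm
    _ ≤ Filter.liminf (fun m : ℕ => ∫⁻ x in ball (0 : V2) l,
          ENNReal.ofReal (E1 ((m : ℝ) + 1) l (1 / ((m : ℝ) + 4)) x +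
          (1 / 2 - 5 * (1 / ((m : ℝ) + 4)) / 4) * (2 * mm (‖x‖ ^ 2)))) atTop :=
        lintegral_liminf_le hmeas
    _ ≤ Filter.liminf (fun _ : ℕ =>
          Filter.liminf (fun k => graphArea (v k) (ball (0 : V2) l)) atTop) atTop :=
        liminf_le_liminf (Eventually.of_forall step)
    _ = _ := liminf_const _


/-- For all sufficiently large radii `l`, the relaxed area of the graph of the vortex map
equals `∫_{B_l} √(1 + |∇u|²) dx + π`. -/
theorem relaxedArea_vortex_eq_of_large_radius :
    ∃ l₀ : ℝ, 0 < l₀ ∧ ∀ l : ℝ, l₀ ≤ l →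
      relaxedArea l = vortexGradArea l + ENNReal.ofReal Real.pi := by
  exact ⟨19, by norm_num, fun l hl => le_antisymm (upper_bound l) (lower_bound hl)⟩
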